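/- Suppose char(k) = 0, and let Δ be a homology (d−1)-sphere over k having the weak Lefschetz property. If h_{r−1}(Δ) = h_r(Δ) for some r ≤ d/2, then the simplicial complex Δ(r−1) is Cohen–Macaulay over k of dimension d. -/

import Mathlib

open Finset

variable {V : Type*} [DecidableEq V] [Fintype V]

/-- A (possibly empty) simplicial complex on the vertex set `V`,
given as its set of faces: a collection of finite subsets of `V`
closed under taking subsets. -/
def IsComplex (Δ : Set (Finset V)) : Prop :=
  ∀ F ∈ Δ, ∀ G ⊆ F, G ∈ Δ

/-- `skc Δ i` is the complex `Δ(i) = {F ⊆ V : skelᵢ(2^F) ⊆ Δ}`: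
all subsets `F` of `V` all of whose subsets of cardinality at most `i+1`
are faces of `Δ`. -/
def skc (Δ : Set (Finset V)) (i : ℕ) : Set (Finset V) :=
  {F | ∀ G ⊆ F, G.card ≤ i + 1 → G ∈ Δ}

/-- The `k`-skeleton of a complex: faces of cardinality at most `k+1`. -/
def skel (Δ : Set (Finset V)) (k : ℕ) : Set (Finset V) :=
  {F ∈ Δ | F.card ≤ k + 1}

/-- A missing face of `Δ`: a non-face all of whose proper subsets are faces. -/
def IsMissingFace (Δ : Set (Finset V)) (F : Finset V) : Prop :=
  F ∉ Δ ∧ ∀ G ⊂ F, G ∈ Δ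

/-- The link of a face. -/
def link (Δ : Set (Finset V)) (F : Finset V) : Set (Finset V) :=
  {G | Disjoint F G ∧ F ∪ G ∈ Δ}

/-- `numFacesCard Δ j` is `f_{j-1}(Δ)`, the number of faces of `Δ` of
cardinality `j`. -/
noncomputable def numFacesCard (Δ : Set (Finset V)) (j : ℕ) : ℕ :=
  {F : Finset V | F ∈ Δ ∧ F.card = j}.ncard

/-- The `h`-numbers of a `(d-1)`-dimensional complex:
`h_i = ∑_{j=0}^{i} (-1)^{i-j} C(d-j, i-j) f_{j-1}`. -/
noncomputable def hVec (Δ : Set (Finset V)) (d i : ℕ) : ℤ :=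
  ∑ j ∈ Finset.range (i + 1),
    (-1 : ℤ) ^ (i - j) * ((d - j).choose (i - j)) * (numFacesCard Δ j)

/- ### Reduced simplicial homology over a field -/

section Homology

variable (𝕜 : Type*) [Field 𝕜] [LinearOrder V]

/-- Simplicial chains supported on a given set of finite subsets of `V`. -/
def chainsOn (A : Set (Finset V)) : Submodule 𝕜 (Finset V → 𝕜) where
  carrier := {f | ∀ G, f G ≠ 0 → G ∈ A}
  zero_mem' := by intro G hG; simp at hG
  add_mem' := by
    intro f g hf hg G hG
    by_cases h : f G = 0
    · exact hg G (by simpa [h] using hG)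
    · exact hf G h
  smul_mem' := by
    intro c f hf G hG
    exact hf G (by intro h; simp [h] at hG)

/-- The boundary operator of the (augmented) simplicial chain complex on the
full simplex on `V`: `∂(e_F) = ∑_{v ∈ F} (-1)^{pos of v in F} e_{F \ v}`,
written in the dual form `(∂ f) G = ∑_{v ∉ G} (-1)^{#{u ∈ G : u < v}} f (G ∪ {v})`.
The augmentation is included (singletons map onto the empty-set generator),
so the homology computed below is reduced homology. -/
noncomputable def bdryMap : (Finset V → 𝕜) →ₗ[𝕜] (Finset V → 𝕜) where
  toFun f := fun G => ∑ v ∈ Gᶜ,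
    ((-1 : 𝕜) ^ ((G.filter (fun u => u < v)).card)) * f (insert v G)
  map_add' f g := by
    funext G
    simp [mul_add, Finset.sum_add_distrib]
  map_smul' c f := by
    funext G
    simp [Finset.mul_sum]
    congr 1; funext v; ring

/-- Reduced cycles of `Δ` in cardinality `c` (i.e. dimension `c-1`). -/
noncomputable def redCycles (Δ : Set (Finset V)) (c : ℕ) :
    Submodule 𝕜 (Finset V → 𝕜) :=
  (chainsOn 𝕜 {F | F ∈ Δ ∧ F.card = c}) ⊓ LinearMap.ker (bdryMap 𝕜)

/-- Reduced boundaries of `Δ` in cardinality `c`. -/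
noncomputable def redBdries (Δ : Set (Finset V)) (c : ℕ) :
    Submodule 𝕜 (Finset V → 𝕜) :=
  Submodule.map (bdryMap 𝕜) (chainsOn 𝕜 {F | F ∈ Δ ∧ F.card = c + 1})

/-- `redH 𝕜 Δ c` is the reduced simplicial homology `H̃_{c-1}(Δ; 𝕜)`
(indexed by the cardinality `c` of faces rather than the dimension `c-1`). -/
noncomputable def redH (Δ : Set (Finset V)) (c : ℕ) : Type _ :=
  ↥(redCycles 𝕜 Δ c) ⧸
    Submodule.comap (redCycles 𝕜 Δ c).subtype (redBdries 𝕜 Δ c)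

noncomputable instance (Δ : Set (Finset V)) (c : ℕ) :
    AddCommGroup (redH 𝕜 Δ c) := by
  unfold redH; infer_instance

noncomputable instance (Δ : Set (Finset V)) (c : ℕ) :
    Module 𝕜 (redH 𝕜 Δ c) := by
  unfold redH; infer_instance

/-- `Δ` is a homology `n`-sphere over `𝕜`: it is an `n`-dimensional complex
such that for every face `F` (including `∅`) the reduced homology of the
link of `F` is that of a sphere of dimension `n - #F`, i.e.
`H̃_{c-1}(lk F) = 𝕜` if `c = n + 1 - #F` and `0` otherwise. -/
def IsHomologySphere (Δ : Set (Finset V)) (n : ℕ) : Prop :=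
  IsComplex Δ ∧ (∀ F ∈ Δ, F.card ≤ n + 1) ∧ (∃ F ∈ Δ, F.card = n + 1) ∧
  ∀ F ∈ Δ, ∀ c : ℕ,
    Module.finrank 𝕜 (redH 𝕜 (link Δ F) c) =
      if c + F.card = n + 1 then 1 else 0

/-- The boundary faces of a `d`-dimensional homology ball:
those faces `F` whose link has vanishing top reduced homology. -/
def bdryFaces (Δ : Set (Finset V)) (d : ℕ) : Set (Finset V) :=
  {F | F ∈ Δ ∧
    Module.finrank 𝕜 (redH 𝕜 (link Δ F) (d + 1 - F.card)) = 0}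

/-- `Δ` is a homology `d`-ball over `𝕜`: a `d`-dimensional complex all of
whose links have reduced homology vanishing except possibly in the top
dimension `d - #F`, where it is `𝕜` or `0`, and whose boundary complex is
a homology `(d-1)`-sphere. -/
def IsHomologyBall (Δ : Set (Finset V)) (d : ℕ) : Prop :=
  IsComplex Δ ∧ (∀ F ∈ Δ, F.card ≤ d + 1) ∧ (∃ F ∈ Δ, F.card = d + 1) ∧
  (∀ F ∈ Δ, ∀ c : ℕ,
    (c + F.card = d + 1 → Module.finrank 𝕜 (redH 𝕜 (link Δ F) c) ≤ 1) ∧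
    (c + F.card ≠ d + 1 → Module.finrank 𝕜 (redH 𝕜 (link Δ F) c) = 0)) ∧
  IsHomologySphere 𝕜 (bdryFaces 𝕜 Δ d) (d - 1)

/-- A homology `d`-ball is `(r-1)`-stacked if it has no interior faces of
dimension at most `d - r`, i.e. every interior face has cardinality at
least `d - r + 2`. -/
def IsStackedBall (Δ : Set (Finset V)) (d r : ℕ) : Prop :=
  IsHomologyBall 𝕜 Δ d ∧
  ∀ F ∈ Δ, F ∉ bdryFaces 𝕜 Δ d → d - r + 2 ≤ F.card

end Homology

/- ### Graded commutative algebra over polynomial rings, following the paper's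
definitions of l.s.o.p., Krull dimension, regular sequences, Cohen–Macaulayness,
the weak Lefschetz property, Hilbert series and `h`-vectors. -/

section Ring

variable (𝕜 : Type*) [Field 𝕜] {σ : Type*} [Fintype σ] [DecidableEq σ]

open MvPolynomial

/-- The Stanley–Reisner ideal `I_Δ` of a complex `Δ` on the vertex set `σ`:
the ideal generated by the squarefree monomials `x_F` for non-faces `F`. -/
noncomputable def SRideal (Δ : Set (Finset σ)) : Ideal (MvPolynomial σ 𝕜) :=
  Ideal.span {m | ∃ F : Finset σ, F ∉ Δ ∧ m = ∏ v ∈ F, MvPolynomial.X v}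

/-- `idealLE I m` is `I_{≤ m}`, the ideal generated by the elements of `I`
of degree at most `m`. -/
noncomputable def idealLE (I : Ideal (MvPolynomial σ 𝕜)) (m : ℕ) :
    Ideal (MvPolynomial σ 𝕜) :=
  Ideal.span {f | f ∈ I ∧ f.totalDegree ≤ m}

/-- The degree-`i` graded piece of `S/I`: the image of the space of
homogeneous polynomials of degree `i` in the quotient. -/
noncomputable def quotPiece (I : Ideal (MvPolynomial σ 𝕜)) (i : ℕ) :
    Submodule 𝕜 ((MvPolynomial σ 𝕜) ⧸ I) :=
  Submodule.map (Ideal.Quotient.mkₐ 𝕜 I).toLinearMap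
    (MvPolynomial.homogeneousSubmodule σ 𝕜 i)

/-- The Hilbert function of `S/I`. -/
noncomputable def hilb (I : Ideal (MvPolynomial σ 𝕜)) (i : ℕ) : ℕ :=
  Module.finrank 𝕜 (quotPiece 𝕜 I i)

/-- `θ` is a linear system of parameters for `S/I`: a sequence of linear
forms such that `S/(I + (θ))` is a finite dimensional `𝕜`-vector space. -/
def IsLsop (I : Ideal (MvPolynomial σ 𝕜)) {m : ℕ}
    (θ : Fin m → MvPolynomial σ 𝕜) : Prop :=
  (∀ i, θ i ∈ MvPolynomial.homogeneousSubmodule σ 𝕜 1) ∧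
    FiniteDimensional 𝕜
      ((MvPolynomial σ 𝕜) ⧸ (I ⊔ Ideal.span (Set.range θ)))

/-- The Krull dimension of `S/I`, defined (as in the paper) as the minimal
length of a linear system of parameters. -/
noncomputable def ringDim (I : Ideal (MvPolynomial σ 𝕜)) : ℕ :=
  sInf {m | ∃ θ : Fin m → MvPolynomial σ 𝕜, IsLsop 𝕜 I θ}

/-- `θ` is a regular sequence on `S/I`: each `θ i` is a nonzerodivisor on
`S/(I + (θ_0, …, θ_{i-1}))`. -/
def IsRegSeq (I : Ideal (MvPolynomial σ 𝕜)) {m : ℕ}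
    (θ : Fin m → MvPolynomial σ 𝕜) : Prop :=
  ∀ i : Fin m, ∀ g : MvPolynomial σ 𝕜,
    θ i * g ∈ I ⊔ Ideal.span (θ '' {j | j < i}) →
      g ∈ I ⊔ Ideal.span (θ '' {j | j < i})

/-- `S/I` is Cohen–Macaulay of Krull dimension `d`: the dimension is `d`,
and every l.s.o.p. is a regular sequence. -/
def IsCMdim (I : Ideal (MvPolynomial σ 𝕜)) (d : ℕ) : Prop :=
  ringDim 𝕜 I = d ∧
  ∀ θ : Fin d → MvPolynomial σ 𝕜, IsLsop 𝕜 I θ → IsRegSeq 𝕜 I θ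

/-- An Artinian quotient `S/I` has the weak Lefschetz property: there is a
linear form `w` such that multiplication `×w : (S/I)_m → (S/I)_{m+1}` is
injective or surjective for every `m`. -/
def HasWLP0 (I : Ideal (MvPolynomial σ 𝕜)) : Prop :=
  ∃ w : MvPolynomial σ 𝕜, w ∈ MvPolynomial.homogeneousSubmodule σ 𝕜 1 ∧
    ∀ m : ℕ,
      (∀ f ∈ quotPiece 𝕜 I m, Ideal.Quotient.mk I w * f = 0 → f = 0) ∨
      (∀ g ∈ quotPiece 𝕜 I (m+1), ∃ f ∈ quotPiece 𝕜 I m,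
        Ideal.Quotient.mk I w * f = g)

/-- `S/I` has the weak Lefschetz property (in dimension `d`): it is
Cohen–Macaulay of dimension `d` and there is an l.s.o.p. `Θ` such that
`S/(I + (Θ))` has the (Artinian) weak Lefschetz property. -/
def HasWLP (I : Ideal (MvPolynomial σ 𝕜)) (d : ℕ) : Prop :=
  IsCMdim 𝕜 I d ∧
  ∃ θ : Fin d → MvPolynomial σ 𝕜, IsLsop 𝕜 I θ ∧
    HasWLP0 𝕜 (I ⊔ Ideal.span (Set.range θ))

/-- `(h 0, h 1, …)` is the `h`-vector of `S/I` (where `d = dim S/I`), i.e.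
`H(S/I, t)·(1-t)^d = ∑ᵢ hᵢ tⁱ` as formal power series, expressed by
comparing coefficients. -/
def HasHVector (I : Ideal (MvPolynomial σ 𝕜)) (d : ℕ) (h : ℕ → ℤ) : Prop :=
  ∀ m : ℕ, h m = ∑ j ∈ Finset.range (d + 1),
    if j ≤ m then (-1 : ℤ) ^ j * (d.choose j) * (hilb 𝕜 I (m - j)) else 0

/-- `I` is a homogeneous ideal. -/
def IsHomogIdeal (I : Ideal (MvPolynomial σ 𝕜)) : Prop :=
  ∀ f ∈ I, ∀ i : ℕ, MvPolynomial.homogeneousComponent i f ∈ I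

end Ring

/-!
Let `I = I_Δ` and let `Θ` be an l.s.o.p. for which `S/(I + (Θ))` has a weak Lefschetz form `w`. The
Hilbert function of `S/(I + (Θ))` is the symmetric `h`-vector, so `h_{r-1} = h_r` forces `w` to be
injective in degrees at most `r` and `S/(I + (Θ, w))` to vanish in degree `r`. Put `L = I_{≤ r}`,
which is the Stanley–Reisner ideal of `Δ(r-1)`, and `y = (Θ, w)`. Since `L` and `I` agree in degrees
at most `r`, the sequence `y` is regular on `S/L` in those degrees and `S/(L + (y))` vanishes from
degree `r` on.

It follows that `y` is regular on `S/L`. As `y` is regular on `S`, this amounts to the vanishing of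
`Tor₁(S/L, S/(y)) = (L ∩ (y)) / L(y)`. In degrees at most `r + 1` the vanishing expresses the
regularity of `y` in degrees at most `r`. In higher degrees, complete `y` by linear forms `z` to a
basis of `S_1`. Then an element of `L ∩ (y)` is, modulo `L(y)`, a sum `∑ z_t l_t` with `l_t ∈ L`,
and `(l_t)` is a cycle of the Koszul complex of `z` on `S/(y)`, hence a boundary. The coefficients
of the boundary can be taken in `L` because `S/(L + (y))` vanishes in their degree, so that
subtracting the boundary moves every `l_t` into `L ∩ (y)`, and induction on the degree applies.

Regularity of a linear sequence is a statement about the Hilbert series of the quotient. An exchange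
argument therefore passes it from one l.s.o.p. of a Stanley–Reisner ring to all others, and this is
the Cohen–Macaulay property.
-/

section HilbertFunction

open MvPolynomial

variable {𝕜 : Type*} [Field 𝕜] {σ : Type*} {I J : Ideal (MvPolynomial σ 𝕜)}
  {y : MvPolynomial σ 𝕜} {m : ℕ}

section Grading

attribute [local instance] MvPolynomial.gradedAlgebra

lemma coe_decompose_homogeneousSubmodule (f : MvPolynomial σ 𝕜) (i : ℕ) :
    (DirectSum.decompose (homogeneousSubmodule σ 𝕜) f i : MvPolynomial σ 𝕜) =
      homogeneousComponent i f :=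
  decomposition.decompose'_apply f i

lemma isHomogIdeal_iff_isHomogeneous :
    IsHomogIdeal 𝕜 I ↔ I.IsHomogeneous (homogeneousSubmodule σ 𝕜) := by
  refine ⟨fun h i f hf => ?_, fun h f hf i => homogeneousComponent_mem_of_mem h hf i⟩
  exact coe_decompose_homogeneousSubmodule f i ▸ h f hf i

lemma isHomogIdeal_span {s : Set (MvPolynomial σ 𝕜)} (hs : ∀ f ∈ s, ∃ m, f.IsHomogeneous m) :
    IsHomogIdeal 𝕜 (Ideal.span s) :=
  isHomogIdeal_iff_isHomogeneous.2 (Ideal.homogeneous_span _ _ hs)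

lemma IsHomogIdeal.sup (hI : IsHomogIdeal 𝕜 I) (hJ : IsHomogIdeal 𝕜 J) :
    IsHomogIdeal 𝕜 (I ⊔ J) := by
  rw [isHomogIdeal_iff_isHomogeneous] at *
  exact hI.sup hJ

lemma IsHomogIdeal.mul (hI : IsHomogIdeal 𝕜 I) (hJ : IsHomogIdeal 𝕜 J) :
    IsHomogIdeal 𝕜 (I * J) := by
  rw [isHomogIdeal_iff_isHomogeneous] at *
  exact hI.mul hJ

lemma homogeneousComponent_add_mul {a : ℕ} (hy : y.IsHomogeneous a) (g : MvPolynomial σ 𝕜)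
    (m : ℕ) : homogeneousComponent (a + m) (y * g) = y * homogeneousComponent m g := by
  simpa only [coe_decompose_homogeneousSubmodule] using
    DirectSum.coe_decompose_mul_add_of_left_mem (homogeneousSubmodule σ 𝕜) (b := g) (j := m) hy

end Grading

lemma isHomogIdeal_span_range {ι : Type*} {θ : ι → MvPolynomial σ 𝕜}
    (hθ : ∀ i, (θ i).IsHomogeneous 1) : IsHomogIdeal 𝕜 (Ideal.span (Set.range θ)) :=
  isHomogIdeal_span (by rintro _ ⟨i, rfl⟩; exact ⟨1, hθ i⟩)

lemma IsHomogIdeal.sup_span_range {ι : Type*} {θ : ι → MvPolynomial σ 𝕜} (hI : IsHomogIdeal 𝕜 I)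
    (hθ : ∀ i, (θ i).IsHomogeneous 1) : IsHomogIdeal 𝕜 (I ⊔ Ideal.span (Set.range θ)) :=
  hI.sup (isHomogIdeal_span_range hθ)

lemma mem_sup_span_singleton_iff {f : MvPolynomial σ 𝕜} :
    f ∈ I ⊔ Ideal.span {y} ↔ ∃ a ∈ I, ∃ g, f = a + y * g := by
  simp_rw [Submodule.mem_sup, Ideal.mem_span_singleton, Dvd.dvd]
  grind

lemma IsHomogIdeal.exists_eq_add_mul_of_mem_sup_span_singleton (hI : IsHomogIdeal 𝕜 I)
    (hy : y.IsHomogeneous 1) {f : MvPolynomial σ 𝕜} (hf : f.IsHomogeneous (m + 1))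
    (hmem : f ∈ I ⊔ Ideal.span {y}) :
    ∃ a ∈ I, ∃ g : MvPolynomial σ 𝕜, g.IsHomogeneous m ∧ f = a + y * g := by
  obtain ⟨a, ha, g, rfl⟩ := mem_sup_span_singleton_iff.1 hmem
  refine ⟨homogeneousComponent (m + 1) a, hI a ha _, homogeneousComponent m g,
    homogeneousComponent_isHomogeneous m g, ?_⟩
  rw [← homogeneousComponent_add_mul hy, add_comm 1 m, ← map_add, homogeneousComponent_eq_self hf]

lemma finrank_map_add_finrank_ker_inf {E F : Type*} [AddCommGroup E] [Module 𝕜 E] [AddCommGroup F]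
    [Module 𝕜 F] (f : E →ₗ[𝕜] F) (p : Submodule 𝕜 E) [FiniteDimensional 𝕜 p] :
    Module.finrank 𝕜 (p.map f) + Module.finrank 𝕜 (LinearMap.ker f ⊓ p : Submodule 𝕜 E) =
      Module.finrank 𝕜 p := by
  rw [← LinearMap.finrank_range_add_finrank_ker (f.domRestrict p), LinearMap.range_domRestrict,
    LinearMap.ker_domRestrict, inf_comm,
    ← Submodule.map_comap_subtype,
    LinearEquiv.finrank_eq (Submodule.equivMapOfInjective _ p.injective_subtype _).symm]

lemma mem_quotPiece {f : MvPolynomial σ 𝕜 ⧸ I} :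
    f ∈ quotPiece 𝕜 I m ↔
      ∃ g : MvPolynomial σ 𝕜, g.IsHomogeneous m ∧ Ideal.Quotient.mk I g = f :=
  Iff.rfl

instance [Finite σ] : FiniteDimensional 𝕜 (homogeneousSubmodule σ 𝕜 m) :=
  Module.Finite.iff_fg.2 (homogeneousSubmodule_fg σ 𝕜 m)

instance [Finite σ] : FiniteDimensional 𝕜 (quotPiece 𝕜 I m) :=
  inferInstanceAs (FiniteDimensional 𝕜
    (Submodule.map (Ideal.Quotient.mkₐ 𝕜 I).toLinearMap (homogeneousSubmodule σ 𝕜 m)))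

lemma hilb_eq_zero_iff [Finite σ] :
    hilb 𝕜 I m = 0 ↔ ∀ g : MvPolynomial σ 𝕜, g.IsHomogeneous m → g ∈ I := by
  simp_rw [hilb, Submodule.finrank_eq_zero, Submodule.eq_bot_iff, mem_quotPiece]
  refine ⟨fun h g hg => Ideal.Quotient.eq_zero_iff_mem.1 (h _ ⟨g, hg, rfl⟩), ?_⟩
  rintro h _ ⟨g, hg, rfl⟩
  exact Ideal.Quotient.eq_zero_iff_mem.2 (h g hg)

lemma finiteDimensional_quotient_of_hilb_eq_zero [Finite σ] {N : ℕ}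
    (h : ∀ m, N ≤ m → hilb 𝕜 I m = 0) : FiniteDimensional 𝕜 (MvPolynomial σ 𝕜 ⧸ I) := by
  have htop : (⊤ : Submodule 𝕜 (MvPolynomial σ 𝕜 ⧸ I)) = ⨆ m : Fin N, quotPiece 𝕜 I m := by
    refine (eq_top_iff.2 fun x _ => ?_).symm
    obtain ⟨g, rfl⟩ := Ideal.Quotient.mk_surjective x
    rw [← sum_homogeneousComponent g, map_sum]
    refine Submodule.sum_mem _ fun m _ => ?_
    by_cases hm : m < N
    · exact Submodule.mem_iSup_of_mem (⟨m, hm⟩ : Fin N)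
        (mem_quotPiece.2 ⟨_, homogeneousComponent_isHomogeneous m g, rfl⟩)
    · rw [Ideal.Quotient.eq_zero_iff_mem.2
        (hilb_eq_zero_iff.1 (h m (not_lt.1 hm)) _ (homogeneousComponent_isHomogeneous m g))]
      exact zero_mem _
  refine Module.finite_def.2 ?_
  rw [htop, ← Module.Finite.iff_fg]
  infer_instance

lemma hilb_congr [Finite σ] (h : ∀ g : MvPolynomial σ 𝕜, g.IsHomogeneous m → (g ∈ I ↔ g ∈ J)) :
    hilb 𝕜 I m = hilb 𝕜 J m := by
  have hker : LinearMap.ker (Ideal.Quotient.mkₐ 𝕜 I).toLinearMap ⊓ homogeneousSubmodule σ 𝕜 m =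
      LinearMap.ker (Ideal.Quotient.mkₐ 𝕜 J).toLinearMap ⊓ homogeneousSubmodule σ 𝕜 m := by
    ext g
    simpa [Ideal.Quotient.eq_zero_iff_mem] using h g
  have hI := finrank_map_add_finrank_ker_inf (Ideal.Quotient.mkₐ 𝕜 I).toLinearMap
    (homogeneousSubmodule σ 𝕜 m)
  have hJ := finrank_map_add_finrank_ker_inf (Ideal.Quotient.mkₐ 𝕜 J).toLinearMap
    (homogeneousSubmodule σ 𝕜 m)
  rw [← hJ, hker] at hI
  exact Nat.add_right_cancel hI

/-- Multiplication by `y` from degree `m` of `S/I` is injective. -/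
def MulInjectiveInDegree (I : Ideal (MvPolynomial σ 𝕜)) (y : MvPolynomial σ 𝕜) (m : ℕ) : Prop :=
  ∀ g : MvPolynomial σ 𝕜, g.IsHomogeneous m → y * g ∈ I → g ∈ I

lemma IsHomogIdeal.mem_of_mul_mem {a : ℕ} (hI : IsHomogIdeal 𝕜 I) (hy : y.IsHomogeneous a)
    (h : ∀ m, MulInjectiveInDegree I y m) {g : MvPolynomial σ 𝕜} (hg : y * g ∈ I) : g ∈ I := by
  rw [← sum_homogeneousComponent g]
  refine Ideal.sum_mem _ fun m _ => h m _ (homogeneousComponent_isHomogeneous m g) ?_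
  rw [← homogeneousComponent_add_mul hy]
  exact hI _ hg _

lemma IsHomogIdeal.mulInjectiveInDegree_of_eventually {a : ℕ} (hI : IsHomogIdeal 𝕜 I)
    {z : MvPolynomial σ 𝕜} (hy : y.IsHomogeneous a)
    (hinj : ∀ m, MulInjectiveInDegree I y m) {N : ℕ} (hz : MulInjectiveInDegree I z (a * N + m)) :
    MulInjectiveInDegree I z m := by
  intro g hg hzg
  have hpow : ∀ k, y ^ k * g ∈ I → g ∈ I := by
    intro k
    induction k with
    | zero => simp
    | succ k ih =>
      intro h
      rw [pow_succ', mul_assoc] at h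
      exact ih (hI.mem_of_mul_mem hy hinj h)
  refine hpow N (hz _ ((hy.pow N).mul hg) ?_)
  rw [mul_left_comm]
  exact I.mul_mem_left _ hzg

/-- The dimension of the kernel of multiplication by `y` on the degree `m` piece of `S/I`. -/
noncomputable def mulKerRank (I : Ideal (MvPolynomial σ 𝕜)) (y : MvPolynomial σ 𝕜) (m : ℕ) : ℕ :=
  Module.finrank 𝕜 (LinearMap.ker (LinearMap.mulLeft 𝕜 (Ideal.Quotient.mk I y)) ⊓
    quotPiece 𝕜 I m : Submodule 𝕜 (MvPolynomial σ 𝕜 ⧸ I))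

lemma mulKerRank_eq_zero_iff [Finite σ] :
    mulKerRank I y m = 0 ↔ MulInjectiveInDegree I y m := by
  simp_rw [mulKerRank, Submodule.finrank_eq_zero, Submodule.eq_bot_iff, Submodule.mem_inf,
    LinearMap.mem_ker, LinearMap.mulLeft_apply, mem_quotPiece]
  constructor
  · intro h g hg hyg
    refine Ideal.Quotient.eq_zero_iff_mem.1 (h _ ⟨?_, g, hg, rfl⟩)
    rwa [← map_mul, Ideal.Quotient.eq_zero_iff_mem]
  · rintro h _ ⟨hyg, g, hg, rfl⟩
    rw [← map_mul, Ideal.Quotient.eq_zero_iff_mem] at hyg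
    exact Ideal.Quotient.eq_zero_iff_mem.2 (h g hg hyg)

lemma map_factor_quotPiece (h : I ≤ J) (m : ℕ) :
    (quotPiece 𝕜 I m).map (Ideal.Quotient.factorₐ 𝕜 h).toLinearMap = quotPiece 𝕜 J m := by
  rw [quotPiece, ← Submodule.map_comp]
  rfl

lemma IsHomogIdeal.ker_factor_inf_quotPiece (hI : IsHomogIdeal 𝕜 I) (hy : y.IsHomogeneous 1)
    (m : ℕ) :
    LinearMap.ker (Ideal.Quotient.factorₐ 𝕜 (le_sup_left : I ≤ I ⊔ Ideal.span {y})).toLinearMap ⊓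
        quotPiece 𝕜 I (m + 1) =
      (quotPiece 𝕜 I m).map (LinearMap.mulLeft 𝕜 (Ideal.Quotient.mk I y)) := by
  ext f
  simp only [Submodule.mem_inf, LinearMap.mem_ker, Submodule.mem_map, LinearMap.mulLeft_apply,
    mem_quotPiece]
  constructor
  · rintro ⟨hf, f, hdeg, rfl⟩
    obtain ⟨a, ha, g, hg, rfl⟩ := hI.exists_eq_add_mul_of_mem_sup_span_singleton hy hdeg
      (Ideal.Quotient.eq_zero_iff_mem.1 hf)
    refine ⟨_, ⟨g, hg, rfl⟩, ?_⟩
    rw [map_add, map_mul, Ideal.Quotient.eq_zero_iff_mem.2 ha, zero_add]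
  · rintro ⟨_, ⟨g, hg, rfl⟩, rfl⟩
    refine ⟨Ideal.Quotient.eq_zero_iff_mem.2 ?_, y * g, add_comm m 1 ▸ hy.mul hg, map_mul _ _ _⟩
    exact mem_sup_span_singleton_iff.2 ⟨0, I.zero_mem, g, (zero_add _).symm⟩

/- The exact sequence `0 → K → (S/I)ₘ → (S/I)ₘ₊₁ → (S/(I + y))ₘ₊₁ → 0`. -/
lemma IsHomogIdeal.hilb_sup_span_singleton_succ [Finite σ] (hI : IsHomogIdeal 𝕜 I)
    (hy : y.IsHomogeneous 1) (m : ℕ) :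
    hilb 𝕜 (I ⊔ Ideal.span {y}) (m + 1) + hilb 𝕜 I m =
      hilb 𝕜 I (m + 1) + mulKerRank I y m := by
  have hfactor := finrank_map_add_finrank_ker_inf (Ideal.Quotient.factorₐ 𝕜
    (le_sup_left : I ≤ I ⊔ Ideal.span {y})).toLinearMap (quotPiece 𝕜 I (m + 1))
  have hmul := finrank_map_add_finrank_ker_inf
    (LinearMap.mulLeft 𝕜 (Ideal.Quotient.mk I y)) (quotPiece 𝕜 I m)
  rw [map_factor_quotPiece, hI.ker_factor_inf_quotPiece hy] at hfactor
  simp only [hilb, mulKerRank]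
  omega

lemma IsHomogIdeal.mulInjectiveInDegree_of_hilb_eq_zero [Finite σ]
    (hI : IsHomogIdeal 𝕜 I) {z : MvPolynomial σ 𝕜} (hy : y.IsHomogeneous 1)
    (hz : z.IsHomogeneous 1) {N : ℕ} (hyN : ∀ m > N, hilb 𝕜 (I ⊔ Ideal.span {y}) m = 0)
    (hzN : ∀ m > N, hilb 𝕜 (I ⊔ Ideal.span {z}) m = 0)
    (hinj : ∀ m, MulInjectiveInDegree I y m) (m : ℕ) : MulInjectiveInDegree I z m := by
  refine hI.mulInjectiveInDegree_of_eventually (N := N) hy hinj (mulKerRank_eq_zero_iff.1 ?_)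
  have hrank_y := hI.hilb_sup_span_singleton_succ hy (1 * N + m)
  have hrank_z := hI.hilb_sup_span_singleton_succ hz (1 * N + m)
  rw [hyN _ (by omega), mulKerRank_eq_zero_iff.2 (hinj _)] at hrank_y
  rw [hzN _ (by omega)] at hrank_z
  omega

lemma IsHomogIdeal.mem_sup_span_iff_of_isHomogeneous_zero {s : Set (MvPolynomial σ 𝕜)}
    (hI : IsHomogIdeal 𝕜 I) (hs : ∀ f ∈ s, f.IsHomogeneous 1) {g : MvPolynomial σ 𝕜}
    (hg : g.IsHomogeneous 0) : g ∈ I ⊔ Ideal.span s ↔ g ∈ I := by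
  refine ⟨fun h => ?_, fun h => Ideal.mem_sup_left h⟩
  obtain ⟨a, ha, b, hb, rfl⟩ := Submodule.mem_sup.1 h
  have hconst : Ideal.span s ≤ RingHom.ker constantCoeff :=
    Ideal.span_le.2 fun f hf => (hs f hf).coeff_eq_zero (by simp)
  have hb0 : homogeneousComponent 0 b = 0 := by
    rw [homogeneousComponent_zero, ← constantCoeff_eq, RingHom.mem_ker.1 (hconst hb), C_0]
  rw [← homogeneousComponent_eq_self hg, map_add, hb0, add_zero]
  exact hI a ha 0

lemma IsHomogIdeal.hilb_sup_span_zero [Finite σ] {s : Set (MvPolynomial σ 𝕜)}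
    (hI : IsHomogIdeal 𝕜 I) (hs : ∀ f ∈ s, f.IsHomogeneous 1) :
    hilb 𝕜 (I ⊔ Ideal.span s) 0 = hilb 𝕜 I 0 :=
  hilb_congr fun _ hg => hI.mem_sup_span_iff_of_isHomogeneous_zero hs hg

end HilbertFunction

section LexNonneg

open PowerSeries

variable {R : Type*} [CommRing R] [PartialOrder R] {f g : PowerSeries R}

/-- A power series is lexicographically nonnegative if it is zero or its first nonzero coefficient
is positive. -/
def LexNonneg (f : PowerSeries R) : Prop :=
  ∀ m, (∀ i < m, coeff i f = 0) → 0 ≤ coeff m f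

lemma LexNonneg.of_coeff_nonneg (hf : ∀ m, 0 ≤ coeff m f) : LexNonneg f := fun m _ => hf m

lemma LexNonneg.X_mul (hf : LexNonneg f) : LexNonneg (X * f) := by
  rintro (_ | m) h
  · simp
  · rw [coeff_succ_X_mul]
    exact hf m fun i hi => by simpa using h (i + 1) (by omega)

lemma LexNonneg.one_sub_X_mul (hf : LexNonneg f) : LexNonneg ((1 - X) * f) := by
  have hcoeff (i : ℕ) : coeff (i + 1) ((1 - X) * f) = coeff (i + 1) f - coeff i f := by
    rw [sub_mul, one_mul, map_sub, coeff_succ_X_mul]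
  have hcoeff0 : coeff 0 ((1 - X) * f) = coeff 0 f := by simp
  intro m h
  have hzero : ∀ i < m, coeff i f = 0 := by
    intro i hi
    induction i with
    | zero => rw [← hcoeff0, h 0 hi]
    | succ i ih => simpa [hcoeff, ih (by omega)] using h (i + 1) hi
  obtain _ | m := m
  · exact hcoeff0 ▸ hf 0 hzero
  · rw [hcoeff, hzero m m.lt_succ_self, sub_zero]
    exact hf _ hzero

lemma LexNonneg.one_sub_X_pow_mul (hf : LexNonneg f) (k : ℕ) : LexNonneg ((1 - X) ^ k * f) := by
  induction k with
  | zero => simpa using hf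
  | succ k ih => simpa only [pow_succ', mul_assoc] using ih.one_sub_X_mul

variable [IsOrderedAddMonoid R]

lemma LexNonneg.coeff_eq_zero_of_add (hf : LexNonneg f) (hg : LexNonneg g) {m : ℕ}
    (h : ∀ i < m, coeff i (f + g) = 0) {i : ℕ} (hi : i < m) : coeff i f = 0 ∧ coeff i g = 0 := by
  induction i using Nat.strong_induction_on with
  | _ i ih =>
    have hfi := hf i fun j hj => (ih j hj (hj.trans hi)).1
    have hgi := hg i fun j hj => (ih j hj (hj.trans hi)).2
    exact (add_eq_zero_iff_of_nonneg hfi hgi).1 (map_add (coeff i) f g ▸ h i hi)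

lemma LexNonneg.add (hf : LexNonneg f) (hg : LexNonneg g) : LexNonneg (f + g) := by
  intro m h
  rw [map_add]
  exact add_nonneg (hf m fun i hi => (hf.coeff_eq_zero_of_add hg h hi).1)
    (hg m fun i hi => (hf.coeff_eq_zero_of_add hg h hi).2)

lemma LexNonneg.add_eq_zero_iff (hf : LexNonneg f) (hg : LexNonneg g) :
    f + g = 0 ↔ f = 0 ∧ g = 0 := by
  refine ⟨fun h => ?_, by rintro ⟨rfl, rfl⟩; exact add_zero 0⟩
  have hcoeff (i : ℕ) : coeff i f = 0 ∧ coeff i g = 0 :=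
    hf.coeff_eq_zero_of_add hg (m := i + 1) (fun j _ => by rw [h, map_zero]) i.lt_succ_self
  exact ⟨ext fun i => by simp [hcoeff i], ext fun i => by simp [hcoeff i]⟩

end LexNonneg

section RegularSequences

open MvPolynomial

variable {𝕜 : Type*} [Field 𝕜] {σ : Type*} {I : Ideal (MvPolynomial σ 𝕜)}
  {y : MvPolynomial σ 𝕜} {n : ℕ}

/-- The Hilbert series of `S/I`. -/
noncomputable def hilbSeries (I : Ideal (MvPolynomial σ 𝕜)) : PowerSeries ℤ :=
  PowerSeries.mk fun m => (hilb 𝕜 I m : ℤ)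

/-- The Hilbert series of the kernel of multiplication by `y` on `S/I`. -/
noncomputable def mulKerSeries (I : Ideal (MvPolynomial σ 𝕜)) (y : MvPolynomial σ 𝕜) :
    PowerSeries ℤ :=
  PowerSeries.mk fun m => (mulKerRank I y m : ℤ)

lemma coeff_hilbSeries (m : ℕ) : PowerSeries.coeff m (hilbSeries I) = hilb 𝕜 I m :=
  PowerSeries.coeff_mk _ _

lemma lexNonneg_mulKerSeries : LexNonneg (mulKerSeries I y) :=
  .of_coeff_nonneg fun m => by simp [mulKerSeries]

lemma mulKerSeries_eq_zero_iff [Finite σ] :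
    mulKerSeries I y = 0 ↔ ∀ m, MulInjectiveInDegree I y m := by
  simp [mulKerSeries, PowerSeries.ext_iff, mulKerRank_eq_zero_iff]

lemma IsHomogIdeal.hilbSeries_sup_span_singleton [Finite σ] (hI : IsHomogIdeal 𝕜 I)
    (hy : y.IsHomogeneous 1) :
    hilbSeries (I ⊔ Ideal.span {y}) =
      (1 - PowerSeries.X) * hilbSeries I + PowerSeries.X * mulKerSeries I y := by
  ext (_ | m)
  · simp [hilbSeries, sub_mul, hI.hilb_sup_span_zero (s := {y}) (by simpa using hy)]
  · have hstep := hI.hilb_sup_span_singleton_succ hy m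
    simp only [hilbSeries, mulKerSeries, sub_mul, one_mul, map_add, map_sub, PowerSeries.coeff_mk,
      PowerSeries.coeff_succ_X_mul]
    zify at hstep
    linarith

/-- The difference between the Hilbert series of `S/(I + (θ))` and the series
`(1 - X) ^ n * H(S/I)` that it equals exactly when `θ` is a regular sequence. -/
noncomputable def hilbExcess (I : Ideal (MvPolynomial σ 𝕜)) (θ : Fin n → MvPolynomial σ 𝕜) :
    PowerSeries ℤ :=
  hilbSeries (I ⊔ Ideal.span (Set.range θ)) - (1 - PowerSeries.X) ^ n * hilbSeries I

lemma hilbExcess_zero (θ : Fin 0 → MvPolynomial σ 𝕜) : hilbExcess I θ = 0 := by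
  simp [hilbExcess]

lemma sup_span_range_eq_removeNth (θ : Fin (n + 1) → MvPolynomial σ 𝕜) (i : Fin (n + 1)) :
    I ⊔ Ideal.span (Set.range θ) =
      I ⊔ Ideal.span (Set.range (i.removeNth θ)) ⊔ Ideal.span {θ i} := by
  have hrange : Set.range θ = insert (θ i) (Set.range (i.removeNth θ)) :=
    (congrArg Set.range (Fin.insertNth_self_removeNth i θ)).symm.trans (Fin.range_insertNth i _ _)
  rw [hrange, Ideal.span_insert, sup_comm (Ideal.span {θ i}), sup_assoc]

lemma IsHomogIdeal.hilbExcess_eq_removeNth [Finite σ] (hI : IsHomogIdeal 𝕜 I)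
    {θ : Fin (n + 1) → MvPolynomial σ 𝕜} (hθ : ∀ i, (θ i).IsHomogeneous 1) (i : Fin (n + 1)) :
    hilbExcess I θ = (1 - PowerSeries.X) * hilbExcess I (i.removeNth θ) +
      PowerSeries.X * mulKerSeries (I ⊔ Ideal.span (Set.range (i.removeNth θ))) (θ i) := by
  have hJ := hI.sup_span_range (θ := i.removeNth θ) fun j => hθ (i.succAbove j)
  rw [hilbExcess, hilbExcess, sup_span_range_eq_removeNth θ i,
    hJ.hilbSeries_sup_span_singleton (hθ i)]
  ring

lemma IsHomogIdeal.lexNonneg_hilbExcess [Finite σ] (hI : IsHomogIdeal 𝕜 I)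
    {θ : Fin n → MvPolynomial σ 𝕜} (hθ : ∀ i, (θ i).IsHomogeneous 1) :
    LexNonneg (hilbExcess I θ) := by
  induction n with
  | zero => exact .of_coeff_nonneg fun m => by rw [hilbExcess_zero, map_zero]
  | succ n ih =>
    rw [hI.hilbExcess_eq_removeNth hθ 0]
    exact (ih fun j => hθ _).one_sub_X_mul.add lexNonneg_mulKerSeries.X_mul

lemma IsHomogIdeal.hilbExcess_eq_zero_iff_removeNth [Finite σ] (hI : IsHomogIdeal 𝕜 I)
    {θ : Fin (n + 1) → MvPolynomial σ 𝕜} (hθ : ∀ i, (θ i).IsHomogeneous 1) (i : Fin (n + 1)) :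
    hilbExcess I θ = 0 ↔ hilbExcess I (i.removeNth θ) = 0 ∧
      ∀ m, MulInjectiveInDegree (I ⊔ Ideal.span (Set.range (i.removeNth θ))) (θ i) m := by
  have hX : (1 - PowerSeries.X : PowerSeries ℤ) ≠ 0 :=
    fun h => by simpa using congrArg (PowerSeries.coeff 0) h
  have hexcess := hI.lexNonneg_hilbExcess (θ := i.removeNth θ) fun j => hθ (i.succAbove j)
  rw [hI.hilbExcess_eq_removeNth hθ i,
    hexcess.one_sub_X_mul.add_eq_zero_iff lexNonneg_mulKerSeries.X_mul,
    mul_eq_zero_iff_left hX, mul_eq_zero_iff_left PowerSeries.X_ne_zero, mulKerSeries_eq_zero_iff]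

/-- Each `θ i` is injective from degree `m` of `S/(I + (θ_0, …, θ_{i-1}))`: regularity of the
sequence `θ` in one degree. -/
def IsRegSeqInDegree (I : Ideal (MvPolynomial σ 𝕜)) (θ : Fin n → MvPolynomial σ 𝕜) (m : ℕ) :
    Prop :=
  ∀ i, MulInjectiveInDegree (I ⊔ Ideal.span (θ '' {j | j < i})) (θ i) m

lemma image_init_setOf_lt {α : Type*} (θ : Fin (n + 1) → α) (i : Fin n) :
    Fin.init θ '' {j | j < i} = θ '' {j | j < i.castSucc} := by
  ext x
  constructor
  · rintro ⟨j, hj, rfl⟩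
    exact ⟨j.castSucc, hj, rfl⟩
  · rintro ⟨j, hj, rfl⟩
    exact ⟨j.castLT (hj.trans i.castSucc_lt_last), hj, rfl⟩

lemma range_init {α : Type*} (θ : Fin (n + 1) → α) :
    Set.range (Fin.init θ) = θ '' {j | j < Fin.last n} := by
  ext x
  constructor
  · rintro ⟨j, rfl⟩
    exact ⟨j.castSucc, j.castSucc_lt_last, rfl⟩
  · rintro ⟨j, hj, rfl⟩
    exact ⟨j.castLT hj, rfl⟩

lemma isRegSeqInDegree_succ_iff {θ : Fin (n + 1) → MvPolynomial σ 𝕜} {m : ℕ} :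
    IsRegSeqInDegree I θ m ↔ IsRegSeqInDegree I (Fin.init θ) m ∧
      MulInjectiveInDegree (I ⊔ Ideal.span (Set.range (Fin.init θ))) (θ (Fin.last n)) m := by
  simp_rw [IsRegSeqInDegree, Fin.forall_fin_succ', image_init_setOf_lt, range_init, Fin.init]

lemma IsHomogIdeal.hilbExcess_eq_zero_iff [Finite σ] (hI : IsHomogIdeal 𝕜 I)
    {θ : Fin n → MvPolynomial σ 𝕜} (hθ : ∀ i, (θ i).IsHomogeneous 1) :
    hilbExcess I θ = 0 ↔ ∀ m, IsRegSeqInDegree I θ m := by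
  induction n with
  | zero => simp [hilbExcess_zero, IsRegSeqInDegree]
  | succ n ih =>
    simp_rw [isRegSeqInDegree_succ_iff, forall_and]
    rw [hI.hilbExcess_eq_zero_iff_removeNth hθ (Fin.last n), Fin.removeNth_last,
      ih (θ := Fin.init θ) fun j => hθ j.castSucc]

lemma IsHomogIdeal.isRegSeq_iff (hI : IsHomogIdeal 𝕜 I) {θ : Fin n → MvPolynomial σ 𝕜}
    (hθ : ∀ i, (θ i).IsHomogeneous 1) : IsRegSeq 𝕜 I θ ↔ ∀ m, IsRegSeqInDegree I θ m := by
  refine ⟨fun h m i g _ hg => h i g hg, fun h i g hg => ?_⟩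
  have hJ : IsHomogIdeal 𝕜 (I ⊔ Ideal.span (θ '' {j | j < i})) :=
    hI.sup (isHomogIdeal_span (by rintro _ ⟨j, _, rfl⟩; exact ⟨1, hθ j⟩))
  exact hJ.mem_of_mul_mem (hθ i) (fun m => h m i) hg

lemma IsHomogIdeal.isRegSeq_iff_hilbExcess_eq_zero [Finite σ] (hI : IsHomogIdeal 𝕜 I)
    {θ : Fin n → MvPolynomial σ 𝕜} (hθ : ∀ i, (θ i).IsHomogeneous 1) :
    IsRegSeq 𝕜 I θ ↔ hilbExcess I θ = 0 := by
  rw [hI.isRegSeq_iff hθ, hI.hilbExcess_eq_zero_iff hθ]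

lemma IsHomogIdeal.isRegSeqInDegree_of_hilbSeries_eq [Finite σ] {k : ℕ}
    (hI : IsHomogIdeal 𝕜 I) {y : Fin n → MvPolynomial σ 𝕜} (hy : ∀ i, (y i).IsHomogeneous 1)
    {z : Fin k → MvPolynomial σ 𝕜} (hz : ∀ i, (z i).IsHomogeneous 1)
    (h : hilbSeries (I ⊔ Ideal.span (Set.range y) ⊔ Ideal.span (Set.range z)) =
      (1 - PowerSeries.X) ^ (n + k) * hilbSeries I) :
    (∀ m, IsRegSeqInDegree I y m) ∧
      ∀ m, IsRegSeqInDegree (I ⊔ Ideal.span (Set.range y)) z m := by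
  have hJ := hI.sup_span_range hy
  have hsum : (1 - PowerSeries.X) ^ k * hilbExcess I y +
      hilbExcess (I ⊔ Ideal.span (Set.range y)) z = 0 := by
    rw [hilbExcess, hilbExcess, h, pow_add]
    ring
  have hX : (1 - PowerSeries.X : PowerSeries ℤ) ^ k ≠ 0 :=
    fun h => by simpa using congrArg (PowerSeries.coeff 0) h
  rwa [((hI.lexNonneg_hilbExcess hy).one_sub_X_pow_mul k).add_eq_zero_iff
    (hJ.lexNonneg_hilbExcess hz), mul_eq_zero_iff_left hX, hI.hilbExcess_eq_zero_iff hy,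
    hJ.hilbExcess_eq_zero_iff hz] at hsum

end RegularSequences

section StanleyReisner

open MvPolynomial

section Ideal

variable {𝕜 : Type*} [Field 𝕜] {σ : Type*}

lemma finsuppIndicator_le_iff (F : Finset σ) (a : σ →₀ ℕ) :
    ∑ v ∈ F, Finsupp.single v 1 ≤ a ↔ F ⊆ a.support := by
  classical
  simp only [Finsupp.le_def, Finset.subset_iff, Finsupp.mem_support_iff, Finsupp.finsetSum_apply,
    Finsupp.single_apply, Finset.sum_ite_eq']
  refine forall_congr' fun v => ?_
  split_ifs with hv <;> simp [hv, Nat.one_le_iff_ne_zero]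

lemma IsComplex.mem_SRideal_iff {Δ : Set (Finset σ)} (hΔ : IsComplex Δ) {f : MvPolynomial σ 𝕜} :
    f ∈ SRideal 𝕜 Δ ↔ ∀ a ∈ f.support, a.support ∉ Δ := by
  have hgen : {m | ∃ F : Finset σ, F ∉ Δ ∧ m = ∏ v ∈ F, (X v : MvPolynomial σ 𝕜)} =
      (fun s => monomial s 1) '' ((fun F => ∑ v ∈ F, Finsupp.single v 1) '' Δᶜ) := by
    ext m
    simp [monomial_sum_one, X, eq_comm]
  rw [SRideal, hgen, mem_ideal_span_monomial_image]
  simp_rw [Set.exists_mem_image, finsuppIndicator_le_iff]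
  exact forall₂_congr fun a _ => ⟨fun ⟨F, hF, hFa⟩ ha => hF (hΔ _ ha _ hFa),
    fun ha => ⟨a.support, ha, subset_rfl⟩⟩

lemma isHomogIdeal_SRideal (Δ : Set (Finset σ)) : IsHomogIdeal 𝕜 (SRideal 𝕜 Δ) := by
  refine isHomogIdeal_span ?_
  rintro _ ⟨F, -, rfl⟩
  exact ⟨_, IsHomogeneous.prod F _ (fun _ => 1) fun v _ => isHomogeneous_X 𝕜 v⟩

variable [Fintype σ] [DecidableEq σ]

lemma mem_finsuppAntidiag_univ_iff {a : σ →₀ ℕ} {m : ℕ} :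
    a ∈ univ.finsuppAntidiag m ↔ a.degree = m := by
  simp [Finsupp.degree_eq_sum]

open Classical in
lemma IsComplex.hilb_SRideal {Δ : Set (Finset σ)} (hΔ : IsComplex Δ) (m : ℕ) :
    hilb 𝕜 (SRideal 𝕜 Δ) m = #{a ∈ univ.finsuppAntidiag m | a.support ∈ Δ} := by
  set A : Finset (σ →₀ ℕ) := {a ∈ univ.finsuppAntidiag m | a.support ∈ Δ} with hA
  have hmemA (a : σ →₀ ℕ) : a ∈ A ↔ a.degree = m ∧ a.support ∈ Δ := by
    rw [hA, Finset.mem_filter, mem_finsuppAntidiag_univ_iff]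
  let coeffs : MvPolynomial σ 𝕜 →ₗ[𝕜] A → 𝕜 := LinearMap.pi fun a => lcoeff 𝕜 a.1
  have hker : LinearMap.ker (Ideal.Quotient.mkₐ 𝕜 (SRideal 𝕜 Δ)).toLinearMap ⊓
      homogeneousSubmodule σ 𝕜 m = LinearMap.ker coeffs ⊓ homogeneousSubmodule σ 𝕜 m := by
    ext g
    simp only [Submodule.mem_inf, LinearMap.mem_ker, and_congr_left_iff]
    intro hg
    change Ideal.Quotient.mk (SRideal 𝕜 Δ) g = 0 ↔ (fun a : A => coeff a.1 g) = 0
    rw [Ideal.Quotient.eq_zero_iff_mem, hΔ.mem_SRideal_iff, funext_iff]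
    simp only [mem_support_iff, Pi.zero_apply, Subtype.forall, hmemA]
    exact ⟨fun h a ha => by_contra fun hne => h a hne ha.2,
      fun h a hne ha => hne (h a ⟨by_contra fun hdeg => hne (hg.coeff_eq_zero hdeg), ha⟩)⟩
  have hsurj : (homogeneousSubmodule σ 𝕜 m).map coeffs = ⊤ := by
    refine eq_top_iff.2 fun c _ => ⟨∑ a : A, monomial a.1 (c a), ?_, ?_⟩
    · exact sum_mem fun a _ => isHomogeneous_monomial _ ((hmemA a.1).1 a.2).1
    · ext a
      change coeff a.1 (∑ b : A, monomial b.1 (c b)) = c a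
      simp only [coeff_sum, coeff_monomial, ← Subtype.ext_iff, Finset.sum_ite_eq', Finset.mem_univ,
        if_true]
  have hmk := finrank_map_add_finrank_ker_inf
    (Ideal.Quotient.mkₐ 𝕜 (SRideal 𝕜 Δ)).toLinearMap (homogeneousSubmodule σ 𝕜 m)
  rw [hker, ← finrank_map_add_finrank_ker_inf coeffs (homogeneousSubmodule σ 𝕜 m), hsurj,
    finrank_top, Module.finrank_fintype_fun_eq_card, Fintype.card_coe] at hmk
  exact Nat.add_right_cancel hmk

end Ideal

section HPolynomial

variable {σ : Type*} [Fintype σ]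

lemma card_filter_support_eq [DecidableEq σ] (F : Finset σ) (m : ℕ) :
    (#{a ∈ univ.finsuppAntidiag m | a.support = F} : ℤ) =
      PowerSeries.coeff m ((PowerSeries.X * PowerSeries.mk 1) ^ #F) := by
  have hcoeff (k : ℕ) : PowerSeries.coeff k (PowerSeries.X * PowerSeries.mk 1 : PowerSeries ℤ) =
      if k ≠ 0 then 1 else 0 := by
    cases k <;> simp [PowerSeries.coeff_succ_X_mul]
  rw [← Finset.prod_const, PowerSeries.coeff_prod]
  simp_rw [hcoeff, Finset.prod_ite_zero, Finset.prod_const_one, Finset.sum_boole]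
  congr 2
  ext a
  simp only [Finset.mem_filter, mem_finsuppAntidiag', ← Finsupp.mem_support_iff,
    ← Finset.subset_iff, Finset.subset_univ, and_true]
  grind

/-- The `h`-polynomial `∑_{F ∈ Δ} X ^ #F * (1 - X) ^ (n - #F)` of `Δ`, whose coefficients are the
`h`-numbers of `Δ` viewed as an `(n - 1)`-dimensional complex. -/
noncomputable def hPolynomial (Δ : Set (Finset σ)) (n : ℕ) : Polynomial ℤ :=
  open Classical in ∑ F with F ∈ Δ, Polynomial.X ^ #F * (1 - Polynomial.X) ^ (n - #F)

open Classical in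
lemma sum_faces_card_lt_eq {M : Type*} [AddCommMonoid M] (Δ : Set (Finset σ)) (N : ℕ) (g : ℕ → M) :
    ∑ F with F ∈ Δ ∧ #F < N, g #F = ∑ j ∈ range N, numFacesCard Δ j • g j := by
  rw [← Finset.sum_fiberwise_of_maps_to (t := range N) (g := Finset.card) (by simp)]
  refine Finset.sum_congr rfl fun j hj => ?_
  rw [Finset.sum_congr rfl (g := fun _ => g j) (by grind), Finset.sum_const, numFacesCard,
    Set.ncard_eq_toFinset_card']
  congr 2
  ext F
  simp only [Finset.mem_filter, Finset.mem_univ, true_and, Set.mem_toFinset, Set.mem_ofPred_eq]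
  grind

lemma coeff_one_sub_X_pow (k i : ℕ) :
    ((1 - Polynomial.X : Polynomial ℤ) ^ k).coeff i = (-1) ^ i * k.choose i := by
  induction k generalizing i with
  | zero => cases i <;> simp [Polynomial.coeff_one]
  | succ k ih =>
    rw [pow_succ', sub_mul, one_mul, Polynomial.coeff_sub, ih]
    cases i with
    | zero => simp
    | succ i =>
      rw [Polynomial.coeff_X_mul, ih, Nat.choose_succ_succ]
      push_cast
      ring

lemma coeff_hPolynomial (Δ : Set (Finset σ)) (n i : ℕ) :
    (hPolynomial Δ n).coeff i = hVec Δ n i := by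
  classical
  simp only [hPolynomial, Polynomial.finsetSum_coeff, Polynomial.coeff_X_pow_mul',
    coeff_one_sub_X_pow, hVec, ← Nat.lt_succ_iff]
  rw [← Finset.sum_filter, Finset.filter_filter, sum_faces_card_lt_eq Δ (i + 1)
    fun j => (-1 : ℤ) ^ (i - j) * (n - j).choose (i - j)]
  simp only [nsmul_eq_mul, mul_comm]

lemma eval_one_hPolynomial {Δ : Set (Finset σ)} {n : ℕ} (hcard : ∀ F ∈ Δ, #F ≤ n) :
    (hPolynomial Δ n).eval 1 = numFacesCard Δ n := by
  classical
  have hpow (F : Finset σ) (hF : F ∈ Δ) : (0 : ℤ) ^ (n - #F) = if #F = n then 1 else 0 := by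
    rw [zero_pow_eq]
    grind
  simp only [hPolynomial, numFacesCard, Set.ncard_eq_toFinset_card', Polynomial.eval_finsetSum]
  simp +contextual [hpow, Finset.sum_filter, ← ite_and]

lemma IsComplex.coe_hPolynomial {𝕜 : Type*} [Field 𝕜] {Δ : Set (Finset σ)} (hΔ : IsComplex Δ)
    {n : ℕ} (hcard : ∀ F ∈ Δ, #F ≤ n) :
    (hPolynomial Δ n : PowerSeries ℤ) =
      (1 - PowerSeries.X) ^ n * hilbSeries (SRideal 𝕜 Δ) := by
  classical
  have hseries : hilbSeries (SRideal 𝕜 Δ) =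
      ∑ F with F ∈ Δ, ((PowerSeries.X : PowerSeries ℤ) * PowerSeries.mk 1) ^ #F := by
    ext m
    simp_rw [coeff_hilbSeries, map_sum, ← card_filter_support_eq, hΔ.hilb_SRideal]
    rw [Finset.card_eq_sum_card_fiberwise (f := Finsupp.support) (t := {F | F ∈ Δ})
      (fun a ha => by simpa using (Finset.mem_filter.1 ha).2), Nat.cast_sum]
    refine Finset.sum_congr rfl fun F hF => ?_
    rw [Finset.filter_filter]
    congr 2
    grind
  rw [hseries, mul_sum, hPolynomial, ← Polynomial.coeToPowerSeries.ringHom_apply, map_sum]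
  refine Finset.sum_congr rfl fun F hF => ?_
  obtain ⟨k, rfl⟩ := Nat.exists_eq_add_of_le (hcard F (by simpa using hF))
  have hpow : (PowerSeries.mk 1 : PowerSeries ℤ) ^ #F * (1 - PowerSeries.X) ^ #F = 1 := by
    rw [← mul_pow, PowerSeries.mk_one_mul_one_sub_eq_one, one_pow]
  simp only [map_mul, map_pow, map_sub, map_one, Polynomial.coeToPowerSeries.ringHom_apply,
    Polynomial.coe_X, Nat.add_sub_cancel_left]
  linear_combination -(PowerSeries.X ^ #F * (1 - PowerSeries.X) ^ k) * hpow

end HPolynomial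

section RegularParameters

variable {𝕜 : Type*} [Field 𝕜] {σ : Type*} [Finite σ] {Δ : Set (Finset σ)} {n : ℕ}
  {θ : Fin n → MvPolynomial σ 𝕜}

lemma IsComplex.hilb_sup_span_range_eq_hVec (hΔ : IsComplex Δ) (hcard : ∀ F ∈ Δ, #F ≤ n)
    (hθ : ∀ i, (θ i).IsHomogeneous 1) (hreg : IsRegSeq 𝕜 (SRideal 𝕜 Δ) θ) (i : ℕ) :
    (hilb 𝕜 (SRideal 𝕜 Δ ⊔ Ideal.span (Set.range θ)) i : ℤ) = hVec Δ n i := by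
  have := Fintype.ofFinite σ
  have hexcess := ((isHomogIdeal_SRideal Δ).isRegSeq_iff_hilbExcess_eq_zero hθ).1 hreg
  rw [hilbExcess, sub_eq_zero, ← hΔ.coe_hPolynomial hcard] at hexcess
  rw [← coeff_hilbSeries, hexcess, Polynomial.coeff_coe, coeff_hPolynomial]

lemma IsComplex.exists_card_eq_of_isRegSeq (hΔ : IsComplex Δ) (hempty : ∅ ∈ Δ)
    (hcard : ∀ F ∈ Δ, #F ≤ n) (hθ : ∀ i, (θ i).IsHomogeneous 1)
    (hreg : IsRegSeq 𝕜 (SRideal 𝕜 Δ) θ) : ∃ F ∈ Δ, #F = n := by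
  have := Fintype.ofFinite σ
  have hnonneg (i : ℕ) : 0 ≤ (hPolynomial Δ n).coeff i := by
    rw [coeff_hPolynomial, ← hΔ.hilb_sup_span_range_eq_hVec hcard hθ hreg]
    positivity
  have hcoeff_zero : (hPolynomial Δ n).coeff 0 = 1 := by
    have hfaces : {F : Finset σ | F ∈ Δ ∧ #F = 0} = {∅} := by
      ext F
      simp +contextual [Finset.card_eq_zero, hempty]
    rw [coeff_hPolynomial, hVec, Finset.sum_range_one, numFacesCard, hfaces]
    simp
  have hpos : 0 < numFacesCard Δ n := by
    rw [← Nat.cast_pos (α := ℤ), ← eval_one_hPolynomial hcard, Polynomial.eval_eq_sum_range]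
    simp only [one_pow, mul_one]
    exact Finset.sum_pos' (fun i _ => hnonneg i) ⟨0, by simp, by simp [hcoeff_zero]⟩
  exact Set.nonempty_of_ncard_ne_zero hpos.ne'

end RegularParameters

end StanleyReisner

section LinearForms

open MvPolynomial

variable {𝕜 : Type*} [Field 𝕜] {σ : Type*} [Fintype σ]

/-- The linear form `∑ u, a u • X u` with coefficient vector `a`. -/
noncomputable def linearForm : (σ → 𝕜) →ₗ[𝕜] MvPolynomial σ 𝕜 :=
  Fintype.linearCombination 𝕜 X

lemma range_linearForm :
    LinearMap.range (linearForm : (σ → 𝕜) →ₗ[𝕜] MvPolynomial σ 𝕜) = homogeneousSubmodule σ 𝕜 1 := by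
  rw [homogeneousSubmodule_one_eq_span_X, linearForm, Fintype.range_linearCombination]

lemma isHomogeneous_linearForm (a : σ → 𝕜) : (linearForm a).IsHomogeneous 1 := by
  rw [← mem_homogeneousSubmodule, ← range_linearForm]
  exact LinearMap.mem_range_self _ a

lemma exists_linearForm_eq {ι : Type*} {θ : ι → MvPolynomial σ 𝕜}
    (hθ : ∀ i, (θ i).IsHomogeneous 1) : ∃ a : ι → σ → 𝕜, θ = fun i => linearForm (a i) := by
  have hex (i : ι) : ∃ a : σ → 𝕜, linearForm a = θ i := by
    rw [← LinearMap.mem_range, range_linearForm]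
    exact hθ i
  choose a ha using hex
  exact ⟨a, funext fun i => (ha i).symm⟩

lemma linearForm_single_one [DecidableEq σ] (u : σ) : linearForm (Pi.single u (1 : 𝕜)) = X u := by
  rw [linearForm, Fintype.linearCombination_apply_single, one_smul]

lemma algHom_linearForm {A : Type*} [Semiring A] [Algebra 𝕜 A] (φ : MvPolynomial σ 𝕜 →ₐ[𝕜] A)
    (a : σ → 𝕜) : φ (linearForm a) = ∑ u, a u • φ (X u) := by
  simp [linearForm, Fintype.linearCombination_apply]

lemma mem_of_forall_linearForm_mul_mem {s : Set (σ → 𝕜)} (hs : Submodule.span 𝕜 s = ⊤)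
    {P : Submodule 𝕜 (MvPolynomial σ 𝕜)} {m : ℕ}
    (hP : ∀ a ∈ s, ∀ q : MvPolynomial σ 𝕜, q.IsHomogeneous m → linearForm a * q ∈ P)
    {g : MvPolynomial σ 𝕜} (hg : g.IsHomogeneous (m + 1)) : g ∈ P := by
  rw [← mem_homogeneousSubmodule, ← homogeneousSubmodule_one_pow, pow_succ',
    homogeneousSubmodule_one_pow, ← range_linearForm] at hg
  refine Submodule.mul_le.2 ?_ hg
  rintro _ ⟨a, rfl⟩ q hq
  have hspan : Submodule.span 𝕜 s ≤ P.comap (LinearMap.mulRight 𝕜 q ∘ₗ linearForm) :=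
    Submodule.span_le.2 fun b hb => hP b hb q hq
  exact hspan (hs ▸ Submodule.mem_top (x := a))

lemma exists_dotProduct_ne_zero [Infinite 𝕜] {ι : Type*} [Finite ι] (q : ι → σ → 𝕜) :
    ∃ c : σ → 𝕜, ∀ i, q i = 0 ∨ c ⬝ᵥ q i ≠ 0 := by
  classical
  obtain ⟨f, hf⟩ := Module.exists_dual_forall_apply_ne_zero (K := 𝕜)
    (fun i : {i // q i ≠ 0} => q i) (fun i => i.2)
  obtain ⟨c, rfl⟩ := (dotProductEquiv 𝕜 σ).surjective f
  exact ⟨c, fun i => or_iff_not_imp_left.2 fun hi => hf ⟨i, hi⟩⟩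

end LinearForms

section SystemsOfParameters

open MvPolynomial

variable {𝕜 : Type*} [Field 𝕜] {σ : Type*} [Fintype σ] {Δ : Set (Finset σ)}

/-- No nonzero vector supported on a face of `Δ` is orthogonal to all the vectors `a j`. For a
complex `Δ`, this says that the linear forms with coefficient vectors `a j` generate an ideal of
finite codimension in the Stanley–Reisner ring of `Δ`. -/
def InjectiveOnFaces {ι : Type*} (Δ : Set (Finset σ)) (a : ι → σ → 𝕜) : Prop :=
  ∀ F ∈ Δ, ∀ p : σ → 𝕜, (∀ v ∉ F, p v = 0) → (∀ j, a j ⬝ᵥ p = 0) → p = 0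

/-- The ideal `I_Δ + (θ)`, where `θ j` is the linear form with coefficient vector `a j`. -/
noncomputable def lsopIdeal {ι : Type*} (Δ : Set (Finset σ)) (a : ι → σ → 𝕜) :
    Ideal (MvPolynomial σ 𝕜) :=
  SRideal 𝕜 Δ ⊔ Ideal.span (Set.range fun j => linearForm (a j))

lemma IsComplex.injectiveOnFaces_of_isLsop (hΔ : IsComplex Δ) {n : ℕ} {a : Fin n → σ → 𝕜}
    (h : IsLsop 𝕜 (SRideal 𝕜 Δ) fun j => linearForm (a j)) : InjectiveOnFaces Δ a := by
  intro F hF p hp ha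
  by_contra hne
  obtain ⟨v, hv⟩ := Function.ne_iff.1 hne
  -- The line through `p` gives a surjection from the quotient onto a polynomial ring.
  let φ : MvPolynomial σ 𝕜 →ₐ[𝕜] Polynomial 𝕜 := aeval fun u => p u • Polynomial.X
  have hφ : lsopIdeal Δ a ≤ RingHom.ker φ := by
    refine sup_le (Ideal.span_le.2 ?_) (Ideal.span_le.2 ?_)
    · rintro _ ⟨G, hG, rfl⟩
      obtain ⟨u, huG, huF⟩ := Finset.not_subset.1 fun hGF => hG (hΔ F hF G hGF)
      change φ _ = 0
      rw [map_prod, Finset.prod_eq_zero huG]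
      simp [φ, hp u huF]
    · rintro _ ⟨j, rfl⟩
      change φ _ = 0
      simp only [algHom_linearForm, φ, aeval_X, smul_smul, ← Finset.sum_smul]
      rw [← dotProduct, ha j, zero_smul]
  have hsurj : Function.Surjective (Ideal.Quotient.liftₐ _ φ hφ) := by
    refine Ideal.Quotient.lift_surjective_of_surjective _ _ fun f => ?_
    refine ⟨Polynomial.aeval ((p v)⁻¹ • X v) f, ?_⟩
    change φ _ = f
    rw [← Polynomial.aeval_algHom_apply, map_smul, aeval_X, smul_smul, inv_mul_cancel₀ hv, one_smul,
      Polynomial.aeval_X_left_apply]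
  have hfin : FiniteDimensional 𝕜 (MvPolynomial σ 𝕜 ⧸ lsopIdeal Δ a) := h.2
  exact Polynomial.not_finite (R := 𝕜)
    (Module.Finite.of_surjective (Ideal.Quotient.liftₐ _ φ hφ).toLinearMap hsurj)

lemma InjectiveOnFaces.card_le {n : ℕ} {a : Fin n → σ → 𝕜} (h : InjectiveOnFaces Δ a)
    {F : Finset σ} (hF : F ∈ Δ) : #F ≤ n := by
  let extend : (F → 𝕜) →ₗ[𝕜] σ → 𝕜 := Function.ExtendByZero.linearMap 𝕜 Subtype.val
  have hinj : Function.Injective (Matrix.mulVecLin (Matrix.of a) ∘ₗ extend) := by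
    rw [injective_iff_map_eq_zero]
    intro p hp
    have hext : extend p = 0 := h F hF _ (fun v hv => by simp [extend, hv]) (congrFun hp)
    funext u
    simpa [extend, Subtype.val_injective.extend_apply] using congrFun hext u.1
  simpa using LinearMap.finrank_le_finrank_of_injective hinj

lemma InjectiveOnFaces.span_eq_top [DecidableEq σ] {ι : Type*} {a : ι → σ → 𝕜}
    (h : InjectiveOnFaces Δ a) {F : Finset σ} (hF : F ∈ Δ) :
    Submodule.span 𝕜 (Set.range a ∪ (Pi.single · 1) '' {u | u ∉ F}) = ⊤ := by
  by_contra hne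
  obtain ⟨f, hf_ne, hf⟩ := Submodule.exists_le_ker_of_lt_top _ (lt_top_iff_ne_top.2 hne)
  obtain ⟨p, rfl⟩ := (dotProductEquiv 𝕜 σ).surjective f
  have horth (b : σ → 𝕜) (hb : b ∈ Set.range a ∪ (Pi.single · 1) '' {u | u ∉ F}) : p ⬝ᵥ b = 0 :=
    hf (Submodule.subset_span hb)
  have hp : p = 0 := by
    refine h F hF p (fun v hv => ?_) fun j => ?_
    · simpa using horth (Pi.single v 1) (.inr ⟨v, hv, rfl⟩)
    · rw [dotProduct_comm]
      exact horth _ (.inl ⟨j, rfl⟩)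
  exact hf_ne (by rw [hp, map_zero])

lemma InjectiveOnFaces.prod_X_mul_mem {ι : Type*} {a : ι → σ → 𝕜} (h : InjectiveOnFaces Δ a)
    {m : ℕ} {F : Finset σ} (hm : Fintype.card σ < #F + m) {g : MvPolynomial σ 𝕜}
    (hg : g.IsHomogeneous m) : (∏ v ∈ F, X v) * g ∈ lsopIdeal Δ a := by
  classical
  induction m generalizing F g with
  | zero => exact absurd F.card_le_univ (by omega)
  | succ m ih =>
    by_cases hF : F ∈ Δ
    swap
    · exact Ideal.mul_mem_right _ _ (Ideal.mem_sup_left (Ideal.subset_span ⟨F, hF, rfl⟩))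
    let P := ((lsopIdeal Δ a).restrictScalars 𝕜).comap (LinearMap.mulLeft 𝕜 (∏ v ∈ F, X v))
    refine mem_of_forall_linearForm_mul_mem (P := P) (h.span_eq_top hF) ?_ hg
    rintro _ (⟨j, rfl⟩ | ⟨u, hu, rfl⟩) q hq
    · exact Ideal.mul_mem_left _ _
        (Ideal.mul_mem_right _ _ (Ideal.mem_sup_right (Ideal.subset_span (Set.mem_range_self j))))
    · have hmem := ih (F := insert u F) (by rw [Finset.card_insert_of_notMem hu]; omega) hq
      rw [Finset.prod_insert hu, mul_comm (X u), mul_assoc] at hmem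
      simpa [P, linearForm_single_one] using hmem

lemma InjectiveOnFaces.hilb_lsopIdeal_eq_zero {ι : Type*} {a : ι → σ → 𝕜}
    (h : InjectiveOnFaces Δ a) {m : ℕ} (hm : Fintype.card σ < m) : hilb 𝕜 (lsopIdeal Δ a) m = 0 :=
  hilb_eq_zero_iff.2 fun g hg => by
    simpa using h.prod_X_mul_mem (F := ∅) (by simpa using hm) hg

end SystemsOfParameters

section Exchange

open MvPolynomial

variable {𝕜 : Type*} [Field 𝕜] {σ : Type*} [Fintype σ] {Δ : Set (Finset σ)}

lemma InjectiveOnFaces.exists_forall_eq_smul {ι : Type*} {a : ι → σ → 𝕜}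
    (h : InjectiveOnFaces Δ a) (i : ι) {F : Finset σ} (hF : F ∈ Δ) :
    ∃ q : σ → 𝕜, ∀ p : σ → 𝕜, (∀ v ∉ F, p v = 0) → (∀ j ≠ i, a j ⬝ᵥ p = 0) →
      ∃ t : 𝕜, p = t • q := by
  by_cases hq : ∃ q : σ → 𝕜, (∀ v ∉ F, q v = 0) ∧ (∀ j ≠ i, a j ⬝ᵥ q = 0) ∧ a i ⬝ᵥ q ≠ 0
  · obtain ⟨q, hqF, hqj, hqi⟩ := hq
    refine ⟨q, fun p hpF hpj => ⟨a i ⬝ᵥ p / a i ⬝ᵥ q, sub_eq_zero.1 (h F hF _ ?_ fun j => ?_)⟩⟩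
    · exact fun v hv => by simp [hpF v hv, hqF v hv]
    · by_cases hj : j = i
      · rw [hj, dotProduct_sub, dotProduct_smul, smul_eq_mul, div_mul_cancel₀ _ hqi, sub_self]
      · rw [dotProduct_sub, dotProduct_smul, hpj j hj, hqj j hj, smul_zero, sub_zero]
  · push Not at hq
    refine ⟨0, fun p hpF hpj => ⟨0, ?_⟩⟩
    rw [smul_zero]
    refine h F hF p hpF fun j => ?_
    by_cases hj : j = i
    · exact hj ▸ hq p hpF hpj
    · exact hpj j hj

lemma InjectiveOnFaces.exists_forall_update {ι : Type*} [DecidableEq ι] {a : ι → σ → 𝕜}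
    (h : InjectiveOnFaces Δ a) (i : ι) :
    ∃ q : Δ → σ → 𝕜, ∀ c : σ → 𝕜, (∀ F, q F = 0 ∨ c ⬝ᵥ q F ≠ 0) →
      InjectiveOnFaces Δ (Function.update a i c) := by
  choose q hq using fun F : Δ => h.exists_forall_eq_smul i F.2
  refine ⟨q, fun c hc F hF p hp hpj => ?_⟩
  obtain ⟨t, rfl⟩ := hq ⟨F, hF⟩ p hp fun j hj => by simpa [hj] using hpj j
  have hci : t * (c ⬝ᵥ q ⟨F, hF⟩) = 0 := by simpa using hpj i
  rcases hc ⟨F, hF⟩ with hzero | hne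
  · rw [hzero, smul_zero]
  · rw [(mul_eq_zero.1 hci).resolve_right hne, zero_smul]

lemma InjectiveOnFaces.exists_update [Infinite 𝕜] {ι : Type*} [DecidableEq ι] {a b : ι → σ → 𝕜}
    (ha : InjectiveOnFaces Δ a) (hb : InjectiveOnFaces Δ b) (i : ι) :
    ∃ c : σ → 𝕜, InjectiveOnFaces Δ (Function.update a i c) ∧
      InjectiveOnFaces Δ (Function.update b i c) := by
  obtain ⟨q, hq⟩ := ha.exists_forall_update i
  obtain ⟨q', hq'⟩ := hb.exists_forall_update i
  obtain ⟨c, hc⟩ := exists_dotProduct_ne_zero (Sum.elim q q')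
  exact ⟨c, hq c fun F => hc (.inl F), hq' c fun F => hc (.inr F)⟩

lemma InjectiveOnFaces.hilbExcess_update_eq_zero {n : ℕ} {a : Fin n → σ → 𝕜}
    (h : InjectiveOnFaces Δ a) {i : Fin n} {c : σ → 𝕜}
    (hc : InjectiveOnFaces Δ (Function.update a i c))
    (hreg : hilbExcess (SRideal 𝕜 Δ) (fun j => linearForm (a j)) = 0) :
    hilbExcess (SRideal 𝕜 Δ) (fun j => linearForm (Function.update a i c j)) = 0 := by
  obtain _ | n := n
  · exact i.elim0
  have hI := isHomogIdeal_SRideal (𝕜 := 𝕜) Δ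
  have hlin (b : Fin (n + 1) → σ → 𝕜) (j) : (linearForm (b j)).IsHomogeneous 1 :=
    isHomogeneous_linearForm _
  rw [hI.hilbExcess_eq_zero_iff_removeNth (hlin _) i] at hreg ⊢
  have hremove : i.removeNth (fun j => linearForm (Function.update a i c j)) =
      i.removeNth fun j => linearForm (a j) := by
    funext j
    simp [Fin.removeNth]
  have ha_hilb (m : ℕ) := h.hilb_lsopIdeal_eq_zero (m := m)
  have hc_hilb (m : ℕ) := hc.hilb_lsopIdeal_eq_zero (m := m)
  simp only [lsopIdeal] at ha_hilb hc_hilb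
  rw [sup_span_range_eq_removeNth _ i] at ha_hilb hc_hilb
  rw [hremove] at hc_hilb ⊢
  rw [Function.update_self] at hc_hilb ⊢
  exact ⟨hreg.1, (hI.sup_span_range fun j => hlin a _).mulInjectiveInDegree_of_hilb_eq_zero
    (hlin a i) (isHomogeneous_linearForm c) ha_hilb hc_hilb hreg.2⟩

lemma InjectiveOnFaces.hilbExcess_eq_zero_of_hilbExcess_eq_zero [Infinite 𝕜] {n : ℕ}
    {a b : Fin n → σ → 𝕜} (ha : InjectiveOnFaces Δ a) (hb : InjectiveOnFaces Δ b)
    (hreg : hilbExcess (SRideal 𝕜 Δ) (fun j => linearForm (a j)) = 0) :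
    hilbExcess (SRideal 𝕜 Δ) (fun j => linearForm (b j)) = 0 := by
  -- Replace the vectors one at a time, through a vector that fits both systems.
  suffices h : ∀ (s : Finset (Fin n)) (a b : Fin n → σ → 𝕜), InjectiveOnFaces Δ a →
      InjectiveOnFaces Δ b → (∀ j ∉ s, a j = b j) →
      hilbExcess (SRideal 𝕜 Δ) (fun j => linearForm (a j)) = 0 →
      hilbExcess (SRideal 𝕜 Δ) (fun j => linearForm (b j)) = 0 from
    h univ a b ha hb (by simp) hreg
  intro s
  induction s using Finset.induction_on with
  | empty => exact fun a b _ _ hab hreg => funext (fun j => hab j (by simp)) ▸ hreg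
  | insert i s _ ih =>
    intro a b ha hb hab hreg
    obtain ⟨c, hac, hbc⟩ := ha.exists_update hb i
    have hbc_reg := ih _ _ hac hbc (fun j hj => by by_cases hji : j = i <;> simp_all)
      (ha.hilbExcess_update_eq_zero hac hreg)
    have hb_eq : Function.update (Function.update b i c) i (b i) = b := by simp
    rw [← hb_eq]
    exact hbc.hilbExcess_update_eq_zero (hb_eq.symm ▸ hb) hbc_reg

end Exchange

section CohenMacaulay

variable {𝕜 : Type*} [Field 𝕜] {σ : Type*} [Finite σ] {Δ : Set (Finset σ)} {n : ℕ}
  {θ : Fin n → MvPolynomial σ 𝕜}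

lemma IsComplex.card_le_of_isLsop (hΔ : IsComplex Δ) (hθ : IsLsop 𝕜 (SRideal 𝕜 Δ) θ)
    {F : Finset σ} (hF : F ∈ Δ) : #F ≤ n := by
  have := Fintype.ofFinite σ
  obtain ⟨a, rfl⟩ := exists_linearForm_eq hθ.1
  exact (hΔ.injectiveOnFaces_of_isLsop hθ).card_le hF

lemma IsComplex.isCMdim_of_isRegSeq [Infinite 𝕜] (hΔ : IsComplex Δ) (hempty : ∅ ∈ Δ)
    (hθ : IsLsop 𝕜 (SRideal 𝕜 Δ) θ)
    (hreg : IsRegSeq 𝕜 (SRideal 𝕜 Δ) θ) : IsCMdim 𝕜 (SRideal 𝕜 Δ) n := by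
  have := Fintype.ofFinite σ
  have hI := isHomogIdeal_SRideal (𝕜 := 𝕜) Δ
  refine ⟨le_antisymm (Nat.sInf_le ⟨_, hθ⟩) (le_csInf ⟨n, _, hθ⟩ ?_), fun φ hφ => ?_⟩
  · rintro m ⟨φ, hφ⟩
    obtain ⟨F, hF, rfl⟩ :=
      hΔ.exists_card_eq_of_isRegSeq hempty (fun _ => hΔ.card_le_of_isLsop hθ) hθ.1 hreg
    exact hΔ.card_le_of_isLsop hφ hF
  · rw [hI.isRegSeq_iff_hilbExcess_eq_zero hφ.1]
    rw [hI.isRegSeq_iff_hilbExcess_eq_zero hθ.1] at hreg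
    obtain ⟨a, rfl⟩ := exists_linearForm_eq hθ.1
    obtain ⟨b, rfl⟩ := exists_linearForm_eq hφ.1
    exact (hΔ.injectiveOnFaces_of_isLsop hθ).hilbExcess_eq_zero_of_hilbExcess_eq_zero
      (hΔ.injectiveOnFaces_of_isLsop hφ) hreg

end CohenMacaulay

lemma sum_sum_eq_zero_of_alternating {κ M : Type*} [AddCommGroup M] {s : Finset κ} {p : κ → κ → M}
    (hself : ∀ a ∈ s, p a a = 0) (hswap : ∀ a ∈ s, ∀ b ∈ s, p a b = -p b a) :
    ∑ a ∈ s, ∑ b ∈ s, p a b = 0 := by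
  rw [← Finset.sum_product']
  refine Finset.sum_involution (fun x _ => x.swap) ?_ ?_ ?_ (fun x _ => x.swap_swap)
  · intro x hx
    obtain ⟨h1, h2⟩ := Finset.mem_product.1 hx
    rw [Prod.fst_swap, Prod.snd_swap, hswap _ h1 _ h2, neg_add_cancel]
  · rintro ⟨a, b⟩ hx hne heq
    obtain rfl : b = a := congrArg Prod.fst heq
    exact hne (hself _ (Finset.mem_product.1 hx).1)
  · intro x hx
    exact Finset.mem_product.2 (Finset.mem_product.1 hx).symm

section DehnSommerville

variable {𝕜 : Type*} [Field 𝕜]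

lemma neg_one_pow_card_filter_lt_insert {W : Type*} [LinearOrder W] (G : Finset W) {v w : W}
    (hv : v ∉ G) (hw : w ∉ G) (hvw : v ≠ w) :
    (-1 : 𝕜) ^ #{u ∈ G | u < v} * (-1) ^ #{u ∈ insert v G | u < w} =
      -((-1) ^ #{u ∈ G | u < w} * (-1) ^ #{u ∈ insert w G | u < v}) := by
  wlog hlt : v < w generalizing v w
  · rw [this hw hv hvw.symm (lt_of_le_of_ne (not_lt.1 hlt) hvw.symm), neg_neg]
  rw [Finset.filter_insert, if_pos hlt, Finset.card_insert_of_notMem (by simp [hv]),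
    Finset.filter_insert, if_neg hlt.not_gt, pow_succ]
  ring

lemma mem_chainsOn {W : Type*} {A : Set (Finset W)} {f : Finset W → 𝕜} :
    f ∈ chainsOn 𝕜 A ↔ ∀ G ∉ A, f G = 0 :=
  forall_congr' fun _ => not_imp_comm

lemma finrank_chainsOn {W : Type*} [Finite W] (A : Set (Finset W)) :
    Module.finrank 𝕜 (chainsOn 𝕜 A) = A.ncard := by
  classical
  have := Fintype.ofFinite W
  let e : chainsOn 𝕜 A ≃ₗ[𝕜] (A → 𝕜) :=
    { toFun := fun f a => f.1 a
      map_add' := fun _ _ => rfl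
      map_smul' := fun _ _ => rfl
      invFun := fun g => ⟨fun G => if h : G ∈ A then g ⟨G, h⟩ else 0,
        mem_chainsOn.2 fun _ hG => dif_neg hG⟩
      left_inv := fun f => Subtype.ext <| funext fun G => by
        by_cases hG : G ∈ A <;> simp [hG, mem_chainsOn.1 f.2]
      right_inv := fun g => funext fun a => by simp }
  rw [e.finrank_eq, Module.finrank_pi, Set.ncard_eq_toFinset_card', Set.toFinset_card]

lemma IsComplex.link {W : Type*} [DecidableEq W] {Δ : Set (Finset W)}
    (hΔ : IsComplex Δ) (F : Finset W) : IsComplex (link Δ F) :=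
  fun _ hG _ hHG => ⟨Finset.disjoint_of_subset_right hHG hG.1,
    hΔ _ hG.2 _ (Finset.union_subset_union_right hHG)⟩

lemma sum_powerset_X_pow_mul_one_sub_X_pow {W : Type*} (G : Finset W) {n : ℕ} (hG : #G ≤ n) :
    ∑ F ∈ G.powerset, (Polynomial.X : Polynomial ℤ) ^ #F * (1 - Polynomial.X) ^ (n - #F) =
      (1 - Polynomial.X) ^ (n - #G) := by
  have hbinom := Finset.sum_pow_mul_eq_add_pow (Polynomial.X : Polynomial ℤ) (1 - Polynomial.X) G
  rw [add_sub_cancel, one_pow] at hbinom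
  refine .trans ?_ ((Finset.sum_mul _ _ _).symm.trans
    ((congrArg (· * _) hbinom).trans (one_mul _)))
  refine Finset.sum_congr rfl fun F hF => ?_
  have hle := Finset.card_le_card (Finset.mem_powerset.1 hF)
  rw [mul_assoc, ← pow_add, add_comm (#G - #F), tsub_add_tsub_cancel hG hle]

variable {W : Type*} [Fintype W] [LinearOrder W]

lemma bdryMap_bdryMap (f : Finset W → 𝕜) : bdryMap 𝕜 (bdryMap 𝕜 f) = 0 := by
  funext G
  let g (v w : W) : 𝕜 := if v = w then 0 else
    (-1) ^ #{u ∈ G | u < v} * ((-1) ^ #{u ∈ insert v G | u < w} * f (insert w (insert v G)))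
  have hsum : bdryMap 𝕜 (bdryMap 𝕜 f) G = ∑ v ∈ Gᶜ, ∑ w ∈ Gᶜ, g v w := by
    refine Finset.sum_congr rfl fun v _ => ?_
    rw [← Finset.sum_erase (a := v) Gᶜ (by simp [g]), ← Finset.compl_insert]
    refine (Finset.mul_sum _ _ _).trans (Finset.sum_congr rfl fun w hw => ?_)
    exact (if_neg fun h : v = w => by simp [h] at hw).symm
  rw [hsum]
  refine sum_sum_eq_zero_of_alternating (fun v _ => if_pos rfl) fun v hv w hw => ?_
  by_cases hvw : v = w
  · simp [g, hvw]
  simp only [g, if_neg hvw, if_neg (Ne.symm hvw), Finset.insert_comm w v, ← mul_assoc,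
    neg_one_pow_card_filter_lt_insert G (Finset.mem_compl.1 hv) (Finset.mem_compl.1 hw) hvw,
    neg_mul]

lemma IsComplex.redBdries_le_redCycles {Λ : Set (Finset W)} (hΛ : IsComplex Λ) (c : ℕ) :
    redBdries 𝕜 Λ c ≤ redCycles 𝕜 Λ c := by
  rintro _ ⟨f, hf, rfl⟩
  refine ⟨fun G hG => ?_, bdryMap_bdryMap f⟩
  obtain ⟨v, hv, hne⟩ := Finset.exists_ne_zero_of_sum_ne_zero hG
  obtain ⟨hmem, hcard⟩ := hf _ (right_ne_zero_of_mul hne)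
  rw [Finset.card_insert_of_notMem (Finset.mem_compl.1 hv)] at hcard
  exact ⟨hΛ _ hmem _ (Finset.subset_insert v G), Nat.succ_injective hcard⟩

lemma finrank_map_bdryMap_add_finrank_redCycles (Λ : Set (Finset W)) (c : ℕ) :
    Module.finrank 𝕜 ((chainsOn 𝕜 {F | F ∈ Λ ∧ #F = c}).map (bdryMap 𝕜)) +
      Module.finrank 𝕜 (redCycles 𝕜 Λ c) = numFacesCard Λ c := by
  rw [redCycles, inf_comm, finrank_map_add_finrank_ker_inf, finrank_chainsOn, numFacesCard]

lemma IsComplex.finrank_redH_add_finrank_redBdries {Λ : Set (Finset W)} (hΛ : IsComplex Λ)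
    (c : ℕ) :
    Module.finrank 𝕜 (redH 𝕜 Λ c) + Module.finrank 𝕜 (redBdries 𝕜 Λ c) =
      Module.finrank 𝕜 (redCycles 𝕜 Λ c) := by
  rw [← (Submodule.comapSubtypeEquivOfLe (hΛ.redBdries_le_redCycles c)).finrank_eq]
  exact Submodule.finrank_quotient_add_finrank _

lemma finrank_map_bdryMap_chainsOn_empty (Λ : Set (Finset W)) :
    Module.finrank 𝕜 ((chainsOn 𝕜 {F | F ∈ Λ ∧ #F = 0}).map (bdryMap 𝕜)) = 0 := by
  rw [Submodule.finrank_eq_zero, Submodule.eq_bot_iff]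
  rintro _ ⟨f, hf, rfl⟩
  exact funext fun G => Finset.sum_eq_zero fun v _ => by
    rw [mem_chainsOn.1 hf _ (by simp), mul_zero]

lemma redBdries_eq_bot_of_card_le (Λ : Set (Finset W)) {c : ℕ} (hc : Fintype.card W ≤ c) :
    redBdries 𝕜 Λ c = ⊥ := by
  refine (Submodule.eq_bot_iff _).2 ?_
  rintro _ ⟨f, hf, rfl⟩
  refine funext fun G => Finset.sum_eq_zero fun v _ => ?_
  rw [mem_chainsOn.1 hf _ fun h => ?_, mul_zero]
  exact (hc.trans_lt (Nat.lt_of_succ_le (h.2.symm.trans_le (Finset.card_le_univ _)))).false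

lemma IsComplex.sum_numFacesCard_eq_sum_finrank_redH_add {Λ : Set (Finset W)} (hΛ : IsComplex Λ)
    (N : ℕ) :
    ∑ c ∈ range (N + 1), (-1 : ℤ) ^ c * numFacesCard Λ c =
      ∑ c ∈ range (N + 1), (-1 : ℤ) ^ c * Module.finrank 𝕜 (redH 𝕜 Λ c) +
        (-1) ^ N * Module.finrank 𝕜 (redBdries 𝕜 Λ N) := by
  induction N with
  | zero =>
    have hchains := finrank_map_bdryMap_add_finrank_redCycles (𝕜 := 𝕜) Λ 0
    rw [finrank_map_bdryMap_chainsOn_empty] at hchains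
    simp [← hchains, ← hΛ.finrank_redH_add_finrank_redBdries]
  | succ N ih =>
    have hchains : Module.finrank 𝕜 (redBdries 𝕜 Λ N) + _ = _ :=
      finrank_map_bdryMap_add_finrank_redCycles (𝕜 := 𝕜) Λ (N + 1)
    rw [Finset.sum_range_succ, ih, Finset.sum_range_succ _ (N + 1), ← hchains,
      ← hΛ.finrank_redH_add_finrank_redBdries]
    push_cast
    ring

open Classical in
lemma IsComplex.sum_neg_one_pow_card_eq {Λ : Set (Finset W)} (hΛ : IsComplex Λ) {N : ℕ}
    (hN : Fintype.card W ≤ N) :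
    ∑ G with G ∈ Λ, (-1 : ℤ) ^ #G =
      ∑ c ∈ range (N + 1), (-1 : ℤ) ^ c * Module.finrank 𝕜 (redH 𝕜 Λ c) := by
  have hsum := hΛ.sum_numFacesCard_eq_sum_finrank_redH_add (𝕜 := 𝕜) N
  rw [redBdries_eq_bot_of_card_le Λ hN, finrank_bot, Nat.cast_zero, mul_zero, add_zero] at hsum
  have hfaces := sum_faces_card_lt_eq Λ (N + 1) fun j => (-1 : ℤ) ^ j
  simp only [nsmul_eq_mul, mul_comm _ ((-1 : ℤ) ^ _)] at hfaces
  rw [← hsum, ← hfaces]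
  refine Finset.sum_congr (Finset.filter_congr fun G _ => ?_) fun _ _ => rfl
  exact (and_iff_left (Nat.lt_succ_of_le ((Finset.card_le_univ G).trans hN))).symm

open Classical in
lemma sum_faces_superset_eq_sum_link {M : Type*} [AddCommMonoid M] (Δ : Set (Finset W))
    (F : Finset W) (g : ℕ → M) :
    ∑ G with G ∈ Δ ∧ F ⊆ G, g #G = ∑ G with G ∈ link Δ F, g (#F + #G) := by
  refine Finset.sum_bij' (fun G _ => G \ F) (fun G _ => F ∪ G) ?_ ?_ ?_ ?_ ?_ <;>
    intro G hG <;> obtain ⟨-, h1, h2⟩ := Finset.mem_filter.1 hG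
  · exact Finset.mem_filter.2 ⟨Finset.mem_univ _, Finset.disjoint_sdiff,
      (Finset.union_sdiff_of_subset h2).symm ▸ h1⟩
  · exact Finset.mem_filter.2 ⟨Finset.mem_univ _, h2, Finset.subset_union_left⟩
  · exact Finset.union_sdiff_of_subset h2
  · exact Finset.union_sdiff_cancel_left h1
  · rw [add_comm, Finset.card_sdiff_add_card_eq_card h2]

open Classical in
lemma IsHomologySphere.sum_neg_one_pow_card_superset {Δ : Set (Finset W)} {n : ℕ}
    (h : IsHomologySphere 𝕜 Δ n) {F : Finset W} (hF : F ∈ Δ) :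
    ∑ G with G ∈ Δ ∧ F ⊆ G, (-1 : ℤ) ^ #G = (-1) ^ (n + 1) := by
  obtain ⟨hΔ, hcard, -, hH⟩ := h
  obtain ⟨k, hk⟩ := Nat.exists_eq_add_of_le (hcard F hF)
  rw [sum_faces_superset_eq_sum_link Δ F fun j => (-1 : ℤ) ^ j, hk, pow_add]
  simp only [pow_add, ← Finset.mul_sum]
  congr 1
  rw [(hΔ.link F).sum_neg_one_pow_card_eq (𝕜 := 𝕜) (Nat.le_add_right (Fintype.card W) k),
    Finset.sum_eq_single k]
  · rw [hH F hF, if_pos (by omega), Nat.cast_one, mul_one]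
  · intro c _ hc
    rw [hH F hF, if_neg (by omega), Nat.cast_zero, mul_zero]
  · intro hnotMem
    exact absurd (Finset.mem_range.2 (by omega)) hnotMem

open Classical in
lemma IsHomologySphere.hPolynomial_eq {Δ : Set (Finset W)} {n : ℕ}
    (h : IsHomologySphere 𝕜 Δ n) :
    hPolynomial Δ (n + 1) = ∑ G with G ∈ Δ, (Polynomial.X - 1) ^ (n + 1 - #G) := by
  calc hPolynomial Δ (n + 1)
      = ∑ F with F ∈ Δ, ∑ G with G ∈ Δ ∧ F ⊆ G, (-1) ^ (n + 1) * (-1) ^ #G *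
          (Polynomial.X ^ #F * (1 - Polynomial.X) ^ (n + 1 - #F)) := by
        refine Finset.sum_congr rfl fun F hF => ?_
        have heuler := congrArg (Int.cast : ℤ → Polynomial ℤ)
          (h.sum_neg_one_pow_card_superset (Finset.mem_filter.1 hF).2)
        push_cast at heuler
        rw [← Finset.sum_mul, ← Finset.mul_sum, heuler, ← pow_add, Even.neg_one_pow ⟨_, rfl⟩,
          one_mul]
    _ = ∑ G with G ∈ Δ, ∑ F ∈ G.powerset, (-1) ^ (n + 1) * (-1) ^ #G *
          (Polynomial.X ^ #F * (1 - Polynomial.X) ^ (n + 1 - #F)) := by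
        refine Finset.sum_comm' fun F G => ?_
        simp only [Finset.mem_filter, Finset.mem_univ, true_and, Finset.mem_powerset]
        exact ⟨fun ⟨_, hG, hFG⟩ => ⟨hFG, hG⟩, fun ⟨hFG, hG⟩ => ⟨h.1 G hG F hFG, hG, hFG⟩⟩
    _ = _ := by
        refine Finset.sum_congr rfl fun G hG => ?_
        have hG' := (Finset.mem_filter.1 hG).2
        obtain ⟨k, hk⟩ := Nat.exists_eq_add_of_le (h.2.1 G hG')
        rw [← Finset.mul_sum, sum_powerset_X_pow_mul_one_sub_X_pow G (h.2.1 G hG'),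
          ← neg_sub Polynomial.X, hk, Nat.add_sub_cancel_left, neg_pow (Polynomial.X - 1),
          ← mul_assoc, ← pow_add, ← pow_add, Even.neg_one_pow ⟨#G + k, by ring⟩, one_mul]

lemma IsHomologySphere.hVec_symm {Δ : Set (Finset W)} {n : ℕ} (h : IsHomologySphere 𝕜 Δ n)
    {i : ℕ} (hi : i ≤ n + 1) : hVec Δ (n + 1) i = hVec Δ (n + 1) (n + 1 - i) := by
  classical
  rw [← coeff_hPolynomial, ← coeff_hPolynomial]
  conv_lhs => rw [h.hPolynomial_eq]
  simp only [hPolynomial, Polynomial.finsetSum_coeff]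
  refine Finset.sum_congr rfl fun G hG => ?_
  obtain ⟨k, hk⟩ := Nat.exists_eq_add_of_le (h.2.1 G (Finset.mem_filter.1 hG).2)
  have hsign : (Polynomial.X - 1 : Polynomial ℤ) ^ k =
      Polynomial.C ((-1) ^ k) * (1 - Polynomial.X) ^ k := by
    rw [← neg_sub 1, neg_pow, Polynomial.C_pow, Polynomial.C_neg, Polynomial.C_1]
  rw [hk, Nat.add_sub_cancel_left, hsign, Polynomial.coeff_C_mul, Polynomial.coeff_X_pow_mul',
    coeff_one_sub_X_pow, ← mul_assoc, ← pow_add]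
  split_ifs with hle
  · rw [coeff_one_sub_X_pow, show #G + k - i - #G = k - i by omega, Nat.choose_symm (by omega),
      neg_one_pow_congr (m := k + i) (n := k - i) (by grind)]
  · rw [Nat.choose_eq_zero_of_lt (by omega), Nat.cast_zero, mul_zero]

end DehnSommerville

section TorOne

open MvPolynomial

variable {𝕜 : Type*} [Field 𝕜] {σ : Type*} {I J L : Ideal (MvPolynomial σ 𝕜)}
  {y : MvPolynomial σ 𝕜} {m n : ℕ}

lemma isHomogIdeal_bot : IsHomogIdeal 𝕜 (⊥ : Ideal (MvPolynomial σ 𝕜)) := by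
  rintro f rfl i
  rw [map_zero]
  exact Ideal.zero_mem _

lemma IsHomogIdeal.exists_eq_add_of_mem_sup (hI : IsHomogIdeal 𝕜 I) (hJ : IsHomogIdeal 𝕜 J)
    {f : MvPolynomial σ 𝕜} (hf : f.IsHomogeneous m) (hmem : f ∈ I ⊔ J) :
    ∃ a ∈ I, ∃ b ∈ J, a.IsHomogeneous m ∧ b.IsHomogeneous m ∧ f = a + b := by
  obtain ⟨a, ha, b, hb, rfl⟩ := Submodule.mem_sup.1 hmem
  refine ⟨_, hI a ha m, _, hJ b hb m, homogeneousComponent_isHomogeneous m a,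
    homogeneousComponent_isHomogeneous m b, ?_⟩
  rw [← map_add, homogeneousComponent_eq_self hf]

/-- `Tor₁(S/L, S/J) = (L ∩ J) / LJ` vanishes in degree `m`. -/
def TorOneVanishesInDegree (L J : Ideal (MvPolynomial σ 𝕜)) (m : ℕ) : Prop :=
  ∀ f ∈ L, f ∈ J → f.IsHomogeneous m → f ∈ L * J

lemma mem_mul_sup_span_singleton_iff {f : MvPolynomial σ 𝕜} :
    f ∈ L * (J ⊔ Ideal.span {y}) ↔ ∃ b ∈ L * J, ∃ l ∈ L, f = b + y * l := by
  simp only [Ideal.mul_sup, Submodule.mem_sup, Ideal.mem_mul_span_singleton]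
  grind

lemma TorOneVanishesInDegree.sup_span_singleton
    (hTor : TorOneVanishesInDegree L J (m + 1)) (hL : IsHomogIdeal 𝕜 L) (hJ : IsHomogIdeal 𝕜 J)
    (hy : y.IsHomogeneous 1) (hinj : MulInjectiveInDegree (L ⊔ J) y m) :
    TorOneVanishesInDegree L (J ⊔ Ideal.span {y}) (m + 1) := by
  intro f hfL hf hdeg
  obtain ⟨b, hb, g, hg, rfl⟩ := hJ.exists_eq_add_mul_of_mem_sup_span_singleton hy hdeg hf
  have hgmem : g ∈ L ⊔ J := hinj g hg <| by
    rw [← add_sub_cancel_left b (y * g)]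
    exact Ideal.sub_mem _ (Ideal.mem_sup_left hfL) (Ideal.mem_sup_right hb)
  obtain ⟨l, hl, c, hc, hldeg, -, rfl⟩ := hL.exists_eq_add_of_mem_sup hJ hg hgmem
  have hyl : (y * l).IsHomogeneous (m + 1) := add_comm 1 m ▸ hy.mul hldeg
  refine mem_mul_sup_span_singleton_iff.2 ⟨_, hTor (b + y * (l + c) - y * l) ?_ ?_ ?_, l, hl,
    (sub_add_cancel _ _).symm⟩
  · exact Ideal.sub_mem _ hfL (L.mul_mem_left y hl)
  · rw [mul_add, add_left_comm, add_sub_cancel_left]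
    exact Ideal.add_mem _ hb (J.mul_mem_left y hc)
  · exact hdeg.sub hyl

lemma TorOneVanishesInDegree.of_sup_span_singleton
    (hTor : ∀ m, TorOneVanishesInDegree L (J ⊔ Ideal.span {y}) m) (hL : IsHomogIdeal 𝕜 L)
    (hJ : IsHomogIdeal 𝕜 J) (hy : y.IsHomogeneous 1) (hinj : ∀ m, MulInjectiveInDegree J y m)
    (m : ℕ) : TorOneVanishesInDegree L J m := by
  induction m with
  | zero =>
    intro f hfL hfJ hf
    have hle : L * (J ⊔ Ideal.span {y}) ≤ L * J ⊔ Ideal.span {y} := by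
      rw [Ideal.mul_sup]
      exact sup_le_sup_left Ideal.mul_le_right _
    exact ((hL.mul hJ).mem_sup_span_iff_of_isHomogeneous_zero (s := {y}) (by simpa using hy) hf).1
      (hle (hTor 0 f hfL (Ideal.mem_sup_left hfJ) hf))
  | succ m ih =>
    intro f hfL hfJ hf
    obtain ⟨b, hb, l, hl, hfbl⟩ :=
      mem_mul_sup_span_singleton_iff.1 (hTor _ f hfL (Ideal.mem_sup_left hfJ) hf)
    have hfcomp : f = homogeneousComponent (m + 1) b + y * homogeneousComponent m l := by
      rw [← homogeneousComponent_add_mul hy, add_comm 1 m, ← map_add, ← hfbl,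
        homogeneousComponent_eq_self hf]
    have hbm : homogeneousComponent (m + 1) b ∈ L * J := hL.mul hJ b hb _
    have hlm : homogeneousComponent m l ∈ J :=
      hinj m _ (homogeneousComponent_isHomogeneous m l) <| by
        rw [← sub_eq_iff_eq_add'.2 hfcomp]
        exact J.sub_mem hfJ (Ideal.mul_le_right (I := L) (J := J) hbm)
    rw [hfcomp]
    exact Ideal.add_mem _ hbm ((L * J).mul_mem_left y
      (ih _ (hL l hl m) hlm (homogeneousComponent_isHomogeneous m l)))

lemma mulInjectiveInDegree_of_torOneVanishesInDegree
    (hTor : TorOneVanishesInDegree L (J ⊔ Ideal.span {y}) (m + 1)) (hL : IsHomogIdeal 𝕜 L)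
    (hJ : IsHomogIdeal 𝕜 J) (hy : y.IsHomogeneous 1) (hinj : ∀ m, MulInjectiveInDegree J y m) :
    MulInjectiveInDegree (L ⊔ J) y m := by
  intro g hg hyg
  obtain ⟨l, hl, b, hb, hldeg, -, hlb⟩ :=
    hL.exists_eq_add_of_mem_sup hJ (add_comm 1 m ▸ hy.mul hg) hyg
  have hmem : l ∈ J ⊔ Ideal.span {y} :=
    mem_sup_span_singleton_iff.2 ⟨-b, J.neg_mem hb, g, by rw [hlb]; ring⟩
  obtain ⟨b', hb', l', hl', hl_eq⟩ := mem_mul_sup_span_singleton_iff.1 (hTor l hl hmem hldeg)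
  have hdiff : y * (g - l') = b' + b := by linear_combination hlb + hl_eq
  have hgl : g - l' ∈ J := hJ.mem_of_mul_mem hy hinj
    (hdiff ▸ J.add_mem (Ideal.mul_le_right (I := L) (J := J) hb') hb)
  rw [← add_sub_cancel l' g]
  exact Ideal.add_mem _ (Ideal.mem_sup_left hl') (Ideal.mem_sup_right hgl)

lemma span_range_eq_sup_last (y : Fin (n + 1) → MvPolynomial σ 𝕜) :
    Ideal.span (Set.range y) =
      Ideal.span (Set.range (Fin.init y)) ⊔ Ideal.span {y (Fin.last n)} := by
  simpa using sup_span_range_eq_removeNth (I := ⊥) y (Fin.last n)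

lemma torOneVanishesInDegree_zero {s : Set (MvPolynomial σ 𝕜)} (hs : ∀ f ∈ s, f.IsHomogeneous 1) :
    TorOneVanishesInDegree L (Ideal.span s) 0 := by
  intro f _ hfs hf
  have hbot := (isHomogIdeal_bot.mem_sup_span_iff_of_isHomogeneous_zero hs hf).1
    (Ideal.mem_sup_right hfs)
  exact Ideal.mem_bot.1 hbot ▸ zero_mem _

lemma IsRegSeqInDegree.torOneVanishesInDegree {y : Fin n → MvPolynomial σ 𝕜}
    (hreg : IsRegSeqInDegree L y m) (hL : IsHomogIdeal 𝕜 L) (hy : ∀ i, (y i).IsHomogeneous 1) :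
    TorOneVanishesInDegree L (Ideal.span (Set.range y)) (m + 1) := by
  induction n with
  | zero =>
    intro f _ hf _
    simp_all
  | succ n ih =>
    obtain ⟨hinit, hlast⟩ := isRegSeqInDegree_succ_iff.1 hreg
    have hyinit (i : Fin n) : (Fin.init y i).IsHomogeneous 1 := hy i.castSucc
    rw [span_range_eq_sup_last]
    exact (ih hinit hyinit).sup_span_singleton hL (isHomogIdeal_span_range hyinit) (hy _) hlast

lemma isRegSeqInDegree_of_torOneVanishesInDegree {y : Fin n → MvPolynomial σ 𝕜}
    (hTor : ∀ m, TorOneVanishesInDegree L (Ideal.span (Set.range y)) m) (hL : IsHomogIdeal 𝕜 L)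
    (hy : ∀ i, (y i).IsHomogeneous 1) (hreg : ∀ m, IsRegSeqInDegree ⊥ y m) (m : ℕ) :
    IsRegSeqInDegree L y m := by
  induction n with
  | zero => exact fun i => i.elim0
  | succ n ih =>
    simp_rw [isRegSeqInDegree_succ_iff, forall_and, bot_sup_eq] at hreg
    simp_rw [span_range_eq_sup_last] at hTor
    have hyinit (i : Fin n) : (Fin.init y i).IsHomogeneous 1 := hy i.castSucc
    have hJ := isHomogIdeal_span_range hyinit
    exact isRegSeqInDegree_succ_iff.2
      ⟨ih (fun k => TorOneVanishesInDegree.of_sup_span_singleton hTor hL hJ (hy _) hreg.2 k)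
        hyinit hreg.1, mulInjectiveInDegree_of_torOneVanishesInDegree (hTor _) hL hJ (hy _) hreg.2⟩

end TorOne

section KoszulCycles

open MvPolynomial

variable {𝕜 : Type*} [Field 𝕜] {σ : Type*} {I : Ideal (MvPolynomial σ 𝕜)} {m k : ℕ}

/-- A square array that is skew-symmetric with zero diagonal, as are the coefficients of a
2-chain of a Koszul complex. -/
def IsAlternatingArray {κ M : Type*} [AddCommGroup M] (p : κ → κ → M) : Prop :=
  (∀ a, p a a = 0) ∧ ∀ a b, p a b = -p b a

lemma IsAlternatingArray.exists_extend {M : Type*} [AddCommGroup M] {p : Fin k → Fin k → M}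
    (hp : IsAlternatingArray p) (c : Fin k → M) :
    ∃ q : Fin (k + 1) → Fin (k + 1) → M, IsAlternatingArray q ∧
      (∀ s t : Fin k, q s.castSucc t.castSucc = p s t) ∧
      ∀ s : Fin k, q s.castSucc (Fin.last k) = c s := by
  refine ⟨Fin.snoc (α := fun _ => Fin (k + 1) → M)
    (fun s => Fin.snoc (α := fun _ => M) (p s) (c s))
    (Fin.snoc (α := fun _ => M) (fun t => -c t) 0), ⟨fun a => ?_, fun a b => ?_⟩, ?_, ?_⟩
  · cases a using Fin.lastCases <;> simp [hp.1]
  · cases a using Fin.lastCases with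
    | last => cases b using Fin.lastCases <;> simp
    | cast a =>
      cases b using Fin.lastCases with
      | last => simp
      | cast b => simpa using hp.2 a b
  · simp
  · simp

lemma IsAlternatingArray.sum_mul_sum_mul_eq_zero {κ R : Type*} [Fintype κ] [CommRing R]
    {p : κ → κ → R} (hp : IsAlternatingArray p) (z : κ → R) :
    ∑ t, z t * ∑ s, z s * p s t = 0 := by
  simp_rw [Finset.mul_sum]
  refine sum_sum_eq_zero_of_alternating (fun a _ => ?_) fun a _ b _ => ?_
  · rw [hp.1, mul_zero, mul_zero]
  · rw [hp.2 b a]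
    ring

/- Choosing only the entries above the diagonal keeps the array alternating. -/
lemma IsAlternatingArray.exists_sub_mem {κ M : Type*} [LinearOrder κ] [AddCommGroup M]
    {p : κ → κ → M} (hp : IsAlternatingArray p) {A B : AddSubgroup M}
    (h : ∀ s t, ∃ q ∈ A, p s t - q ∈ B) :
    ∃ q : κ → κ → M, IsAlternatingArray q ∧ ∀ s t, q s t ∈ A ∧ p s t - q s t ∈ B := by
  choose q hqA hqB using h
  refine ⟨fun s t => if s < t then q s t else if t < s then -q t s else 0,
    ⟨by simp, by grind⟩, fun s t => ?_⟩
  rcases lt_trichotomy s t with hst | rfl | hst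
  · simpa [hst] using ⟨hqA s t, hqB s t⟩
  · simp [hp.1]
  · simpa [hst, hst.not_gt, hp.2 s t, neg_add_eq_sub] using
      ⟨hqA t s, sub_mem_comm_iff.1 (hqB t s)⟩

lemma IsHomogIdeal.exists_eq_add_sum_of_mem_sup_span_range {ι : Type*} [Fintype ι]
    {z : ι → MvPolynomial σ 𝕜} (hI : IsHomogIdeal 𝕜 I) (hz : ∀ i, (z i).IsHomogeneous 1)
    {f : MvPolynomial σ 𝕜} (hf : f.IsHomogeneous (m + 1))
    (hmem : f ∈ I ⊔ Ideal.span (Set.range z)) :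
    ∃ a ∈ I, ∃ c : ι → MvPolynomial σ 𝕜, (∀ i, (c i).IsHomogeneous m) ∧
      f = a + ∑ i, z i * c i := by
  obtain ⟨a, ha, b, hb, rfl⟩ := Submodule.mem_sup.1 hmem
  obtain ⟨c, rfl⟩ := Ideal.mem_span_range_iff_exists_fun.1 hb
  refine ⟨_, hI a ha (1 + m), fun i => homogeneousComponent m (c i),
    fun i => homogeneousComponent_isHomogeneous m _, ?_⟩
  simp_rw [← homogeneousComponent_add_mul (hz _), ← map_sum, ← map_add, mul_comm (z _)]
  rw [homogeneousComponent_eq_self (add_comm m 1 ▸ hf)]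

/- Exactness of the Koszul complex of `z` on `S/I` in homological degree one. -/
lemma IsRegSeqInDegree.exists_alternating_of_sum_mul_mem {z : Fin k → MvPolynomial σ 𝕜}
    (hreg : IsRegSeqInDegree I z (m + 1)) (hI : IsHomogIdeal 𝕜 I)
    (hz : ∀ t, (z t).IsHomogeneous 1) {g : Fin k → MvPolynomial σ 𝕜}
    (hg : ∀ t, (g t).IsHomogeneous (m + 1)) (hsum : ∑ t, z t * g t ∈ I) :
    ∃ p : Fin k → Fin k → MvPolynomial σ 𝕜, IsAlternatingArray p ∧
      (∀ s t, (p s t).IsHomogeneous m) ∧ ∀ t, g t - ∑ s, z s * p s t ∈ I := by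
  induction k with
  | zero => exact ⟨fun s => s.elim0, ⟨fun s => s.elim0, fun s => s.elim0⟩, fun s => s.elim0,
      fun s => s.elim0⟩
  | succ k ih =>
    obtain ⟨hinit, hlast⟩ := isRegSeqInDegree_succ_iff.1 hreg
    have hzinit (t : Fin k) : (Fin.init z t).IsHomogeneous 1 := hz t.castSucc
    rw [Fin.sum_univ_castSucc] at hsum
    have hglast : g (Fin.last k) ∈ I ⊔ Ideal.span (Set.range (Fin.init z)) := by
      refine hlast _ (hg _) ?_
      rw [← add_sub_cancel_left (∑ t : Fin k, z t.castSucc * g t.castSucc) (_ * _)]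
      exact Ideal.sub_mem _ (Ideal.mem_sup_left hsum) (Ideal.mem_sup_right
        (Ideal.sum_mem _ fun t _ => Ideal.mul_mem_right _ _ (Ideal.subset_span ⟨t, rfl⟩)))
    obtain ⟨a, ha, c, hc, hgac⟩ :=
      hI.exists_eq_add_sum_of_mem_sup_span_range hzinit (hg _) hglast
    have hsum' : ∑ t, Fin.init z t * (g t.castSucc + z (Fin.last k) * c t) ∈ I := by
      have heq : ∑ t, Fin.init z t * (g t.castSucc + z (Fin.last k) * c t) =
          ∑ t : Fin k, z t.castSucc * g t.castSucc + z (Fin.last k) * g (Fin.last k) -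
            z (Fin.last k) * a := by
        simp_rw [hgac, mul_add, Finset.sum_add_distrib, Finset.mul_sum,
          mul_left_comm (Fin.init z _)]
        simp only [Fin.init]
        ring
      rw [heq]
      exact I.sub_mem hsum (I.mul_mem_left _ ha)
    obtain ⟨p, hp, hpdeg, hpI⟩ := ih hinit hzinit
      (fun t => (hg _).add (add_comm 1 m ▸ (hz _).mul (hc t))) hsum'
    obtain ⟨q, hq, hqp, hqc⟩ := hp.exists_extend c
    have hqdeg (s t : Fin (k + 1)) : (q s t).IsHomogeneous m := by
      cases s using Fin.lastCases <;> cases t using Fin.lastCases <;>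
        simp [hq.1, hqp, hqc, hq.2 (Fin.last k) (Fin.castSucc _), hpdeg, hc, isHomogeneous_zero,
          IsHomogeneous.neg]
    refine ⟨q, hq, hqdeg, fun t => ?_⟩
    rw [Fin.sum_univ_castSucc]
    cases t using Fin.lastCases with
    | last => simpa [hq.1, hqc, hgac, Fin.init] using ha
    | cast t =>
      rw [hq.2 (Fin.last k), hqc]
      simp_rw [hqp]
      convert hpI t using 1
      simp only [Fin.init]
      ring

end KoszulCycles

section Truncation

open MvPolynomial

variable {𝕜 : Type*} [Field 𝕜] {σ : Type*} {I J L P : Ideal (MvPolynomial σ 𝕜)} {m r : ℕ}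

lemma idealLE_le : idealLE 𝕜 I r ≤ I :=
  Ideal.span_le.2 fun _ hf => hf.1

lemma mem_idealLE_of_isHomogeneous {f : MvPolynomial σ 𝕜} (hf : f.IsHomogeneous m) (hm : m ≤ r)
    (hfI : f ∈ I) : f ∈ idealLE 𝕜 I r :=
  Ideal.subset_span ⟨hfI, hf.totalDegree_le.trans hm⟩

lemma IsHomogIdeal.idealLE_eq_span (hI : IsHomogIdeal 𝕜 I) :
    idealLE 𝕜 I r = Ideal.span {f | f ∈ I ∧ ∃ m ≤ r, f.IsHomogeneous m} := by
  refine le_antisymm (Ideal.span_le.2 ?_) (Ideal.span_le.2 ?_)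
  · rintro f ⟨hfI, hf⟩
    rw [← sum_homogeneousComponent f]
    refine Ideal.sum_mem _ fun i hi => Ideal.subset_span ⟨hI f hfI i, i, ?_,
      homogeneousComponent_isHomogeneous i f⟩
    exact (Nat.lt_succ_iff.1 (Finset.mem_range.1 hi)).trans hf
  · rintro f ⟨hfI, m, hm, hf⟩
    exact mem_idealLE_of_isHomogeneous hf hm hfI

lemma isHomogIdeal_idealLE (hI : IsHomogIdeal 𝕜 I) : IsHomogIdeal 𝕜 (idealLE 𝕜 I r) := by
  rw [hI.idealLE_eq_span]
  exact isHomogIdeal_span fun f hf => hf.2.imp fun _ h => h.2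

lemma IsHomogIdeal.mem_idealLE_mul (hI : IsHomogIdeal 𝕜 I)
    (hP : ∀ m, ∀ g : MvPolynomial σ 𝕜, g.IsHomogeneous (m + 1) → g ∈ P) (hm : r ≤ m)
    {f : MvPolynomial σ 𝕜} (hf : f.IsHomogeneous (m + 1)) (hmem : f ∈ idealLE 𝕜 I r) :
    f ∈ idealLE 𝕜 I r * P := by
  have hcomp {g : MvPolynomial σ 𝕜} (hg : g ∈ idealLE 𝕜 I r) (c : MvPolynomial σ 𝕜) :
      homogeneousComponent (m + 1) (g * c) ∈ idealLE 𝕜 I r * P := by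
    rw [hI.idealLE_eq_span] at hg
    induction hg using Submodule.span_induction generalizing c with
    | mem a ha =>
      obtain ⟨haI, e, he, hadeg⟩ := ha
      obtain ⟨i, rfl⟩ := Nat.exists_eq_add_of_le (he.trans hm)
      rw [add_assoc, homogeneousComponent_add_mul hadeg]
      exact Ideal.mul_mem_mul (mem_idealLE_of_isHomogeneous hadeg he haI)
        (hP i _ (homogeneousComponent_isHomogeneous _ c))
    | zero => simp
    | add a b _ _ iha ihb =>
      rw [add_mul, map_add]
      exact Ideal.add_mem _ (iha c) (ihb c)
    | smul b a _ iha =>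
      rw [smul_eq_mul, mul_comm b, mul_assoc]
      exact iha (b * c)
  simpa only [mul_one, homogeneousComponent_eq_self hf] using hcomp hmem 1

lemma exists_eq_add_sum_of_mem_mul_sup_span_range {ι : Type*} [Fintype ι]
    {z : ι → MvPolynomial σ 𝕜} (hL : IsHomogIdeal 𝕜 L) (hJ : IsHomogIdeal 𝕜 J)
    (hz : ∀ i, (z i).IsHomogeneous 1) {f : MvPolynomial σ 𝕜} (hf : f.IsHomogeneous (m + 1))
    (hmem : f ∈ L * (J ⊔ Ideal.span (Set.range z))) :
    ∃ a ∈ L * J, ∃ l : ι → MvPolynomial σ 𝕜, (∀ i, l i ∈ L) ∧ (∀ i, (l i).IsHomogeneous m) ∧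
      f = a + ∑ i, z i * l i := by
  rw [Ideal.mul_sup] at hmem
  obtain ⟨a, ha, b, hb, rfl⟩ := Submodule.mem_sup.1 hmem
  obtain ⟨l, hl, hlb⟩ := (Submodule.mem_ideal_smul_span_iff_exists_sum L z b).1 hb
  obtain rfl : b = ∑ i, l i * z i := by
    rw [← hlb, Finsupp.sum_fintype _ _ (by simp)]
    rfl
  refine ⟨_, (hL.mul hJ) a ha (1 + m), fun i => homogeneousComponent m (l i),
    fun i => hL _ (hl i) m, fun i => homogeneousComponent_isHomogeneous m _, ?_⟩
  simp_rw [← homogeneousComponent_add_mul (hz _), ← map_sum, ← map_add, mul_comm (z _)]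
  rw [homogeneousComponent_eq_self (add_comm m 1 ▸ hf)]

lemma TorOneVanishesInDegree.succ_of_mem_mul {k : ℕ} {z : Fin k → MvPolynomial σ 𝕜}
    (hTor : TorOneVanishesInDegree L J (m + 1)) (hL : IsHomogIdeal 𝕜 L) (hJ : IsHomogIdeal 𝕜 J)
    (hz : ∀ t, (z t).IsHomogeneous 1) (hreg : IsRegSeqInDegree J z (m + 1))
    (hfull : ∀ g : MvPolynomial σ 𝕜, g.IsHomogeneous m → g ∈ L ⊔ J)
    (hgen : ∀ f ∈ L, f.IsHomogeneous (m + 2) → f ∈ L * (J ⊔ Ideal.span (Set.range z))) :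
    TorOneVanishesInDegree L J (m + 2) := by
  intro f hfL hfJ hf
  obtain ⟨a, ha, l, hlL, hl, hfal⟩ :=
    exists_eq_add_sum_of_mem_mul_sup_span_range hL hJ hz hf (hgen f hfL hf)
  have hsum : ∑ t, z t * l t ∈ J := by
    rw [← sub_eq_iff_eq_add'.2 hfal]
    exact J.sub_mem hfJ (Ideal.mul_le_right (I := L) (J := J) ha)
  obtain ⟨p, hp, hpdeg, hpJ⟩ := hreg.exists_alternating_of_sum_mul_mem hJ hz hl hsum
  obtain ⟨q, hq, hqp⟩ := hp.exists_sub_mem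
    (A := L.toAddSubgroup ⊓ (homogeneousSubmodule σ 𝕜 m).toAddSubgroup) (B := J.toAddSubgroup)
    fun s t => by
      obtain ⟨c, hc, b, hb, hcdeg, -, hpcb⟩ :=
        hL.exists_eq_add_of_mem_sup hJ (hpdeg s t) (hfull _ (hpdeg s t))
      exact ⟨c, ⟨hc, hcdeg⟩, by simpa [hpcb] using hb⟩
  have hcorr (t : Fin k) : l t - ∑ s, z s * q s t ∈ L * J := by
    refine hTor _ (L.sub_mem (hlL t) (L.sum_mem fun s _ => L.mul_mem_left _ (hqp s t).1.1)) ?_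
      ((hl t).sub (IsHomogeneous.sum _ _ _ fun s _ =>
        add_comm 1 m ▸ (hz s).mul (hqp s t).1.2))
    have heq : l t - ∑ s, z s * q s t =
        l t - ∑ s, z s * p s t + ∑ s, z s * (p s t - q s t) := by
      simp only [mul_sub, Finset.sum_sub_distrib]
      ring
    rw [heq]
    exact J.add_mem (hpJ t) (J.sum_mem fun s _ => J.mul_mem_left _ (hqp s t).2)
  have hf_eq : f = a + ∑ t, z t * (l t - ∑ s, z s * q s t) := by
    simp only [mul_sub, Finset.sum_sub_distrib, hq.sum_mul_sum_mul_eq_zero, sub_zero, hfal]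
  rw [hf_eq]
  exact Ideal.add_mem _ ha (Ideal.sum_mem _ fun t _ => Ideal.mul_mem_left _ _ (hcorr t))

end Truncation

section PolynomialRing

open MvPolynomial

variable {𝕜 : Type*} [Field 𝕜] {σ : Type*} {n k : ℕ}

lemma one_sub_X_pow_mul_hilbSeries_bot [Fintype σ] :
    (1 - PowerSeries.X) ^ Fintype.card σ * hilbSeries (⊥ : Ideal (MvPolynomial σ 𝕜)) = 1 := by
  classical
  have hbot : SRideal 𝕜 (Set.univ : Set (Finset σ)) = ⊥ := by simp [SRideal]
  have hcomplex : IsComplex (Set.univ : Set (Finset σ)) := fun _ _ _ _ => trivial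
  have hpoly : hPolynomial (Set.univ : Set (Finset σ)) (Fintype.card σ) = 1 := by
    simpa [hPolynomial] using sum_powerset_X_pow_mul_one_sub_X_pow (univ : Finset σ) le_rfl
  rw [← hbot, ← hcomplex.coe_hPolynomial fun F _ => F.card_le_univ, hpoly, Polynomial.coe_one]

/- A basis of the linear forms is a regular sequence with quotient `𝕜`, by comparison of Hilbert
series. -/
lemma isRegSeqInDegree_bot_of_forall_mem [Fintype σ] {y : Fin n → MvPolynomial σ 𝕜}
    (hy : ∀ i, (y i).IsHomogeneous 1) {z : Fin k → MvPolynomial σ 𝕜}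
    (hz : ∀ i, (z i).IsHomogeneous 1) (hcard : n + k = Fintype.card σ)
    (hmem : ∀ m, ∀ g : MvPolynomial σ 𝕜, g.IsHomogeneous (m + 1) →
      g ∈ Ideal.span (Set.range y) ⊔ Ideal.span (Set.range z)) :
    (∀ m, IsRegSeqInDegree ⊥ y m) ∧
      ∀ m, IsRegSeqInDegree (Ideal.span (Set.range y)) z m := by
  have hquot : hilbSeries (⊥ ⊔ Ideal.span (Set.range y) ⊔ Ideal.span (Set.range z)) = 1 := by
    ext (_ | m)
    · have hzero := congrArg (PowerSeries.coeff 0)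
        (one_sub_X_pow_mul_hilbSeries_bot (𝕜 := 𝕜) (σ := σ))
      rw [coeff_hilbSeries, (isHomogIdeal_bot.sup_span_range hy).hilb_sup_span_zero (by simpa),
        isHomogIdeal_bot.hilb_sup_span_zero (by simpa)]
      simpa [PowerSeries.coeff_mul, coeff_hilbSeries] using hzero
    · rw [coeff_hilbSeries, hilb_eq_zero_iff.2 (by simpa using hmem m)]
      simp [PowerSeries.coeff_one]
  have hreg := isHomogIdeal_bot.isRegSeqInDegree_of_hilbSeries_eq hy hz
    (by rw [hquot, hcard, one_sub_X_pow_mul_hilbSeries_bot])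
  rwa [bot_sup_eq] at hreg

lemma exists_regular_complement [Finite σ] {y : Fin n → MvPolynomial σ 𝕜}
    (hy : ∀ i, (y i).IsHomogeneous 1) (hli : LinearIndependent 𝕜 y) :
    (∀ m, IsRegSeqInDegree ⊥ y m) ∧ ∃ (k : ℕ) (z : Fin k → MvPolynomial σ 𝕜),
      (∀ t, (z t).IsHomogeneous 1) ∧
      (∀ m, IsRegSeqInDegree (Ideal.span (Set.range y)) z m) ∧
      ∀ m, ∀ g : MvPolynomial σ 𝕜, g.IsHomogeneous (m + 1) →
        g ∈ Ideal.span (Set.range y) ⊔ Ideal.span (Set.range z) := by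
  have := Fintype.ofFinite σ
  obtain ⟨a, rfl⟩ := exists_linearForm_eq hy
  have ha : LinearIndependent 𝕜 a := LinearIndependent.of_comp linearForm hli
  obtain ⟨W, hW⟩ := (Submodule.span 𝕜 (Set.range a)).exists_isCompl
  let c := Module.finBasis 𝕜 W
  have hspan : Submodule.span 𝕜 (Set.range a ∪ Set.range fun t => (c t : σ → 𝕜)) = ⊤ := by
    have hc : Submodule.span 𝕜 (Set.range fun t => (c t : σ → 𝕜)) = W := by
      rw [show (Set.range fun t => (c t : σ → 𝕜)) = W.subtype '' Set.range c from
        (Set.range_comp _ _), Submodule.span_image, c.span_eq, Submodule.map_top,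
        Submodule.range_subtype]
    rw [Submodule.span_union, hc, hW.sup_eq_top]
  have hcard : n + Module.finrank 𝕜 W = Fintype.card σ := by
    rw [← Module.finrank_fintype_fun_eq_card 𝕜, ← Submodule.finrank_add_eq_of_isCompl hW,
      finrank_span_eq_card ha, Fintype.card_fin]
  let P : Ideal (MvPolynomial σ 𝕜) := Ideal.span (Set.range fun i => linearForm (a i)) ⊔
    Ideal.span (Set.range fun t => linearForm (c t : σ → 𝕜))
  have hmem (m : ℕ) (g : MvPolynomial σ 𝕜) (hg : g.IsHomogeneous (m + 1)) : g ∈ P := by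
    refine mem_of_forall_linearForm_mul_mem (P := P.restrictScalars 𝕜) hspan ?_ hg
    rintro _ (⟨i, rfl⟩ | ⟨t, rfl⟩) q -
    · exact P.mul_mem_right q (Ideal.mem_sup_left (Ideal.subset_span (Set.mem_range_self i)))
    · exact P.mul_mem_right q (Ideal.mem_sup_right (Ideal.subset_span (Set.mem_range_self t)))
  have hz (t) := isHomogeneous_linearForm (c t : σ → 𝕜)
  obtain ⟨hreg_y, hreg_z⟩ := isRegSeqInDegree_bot_of_forall_mem hy hz hcard hmem
  exact ⟨hreg_y, _, _, hz, hreg_z, hmem⟩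

end PolynomialRing

section TruncationRegular

open MvPolynomial

variable {𝕜 : Type*} [Field 𝕜] {σ : Type*} {I : Ideal (MvPolynomial σ 𝕜)} {n m r : ℕ}
  {y : Fin n → MvPolynomial σ 𝕜}

lemma IsRegSeqInDegree.linearIndependent (hreg : IsRegSeqInDegree I y 0)
    (hI : IsHomogIdeal 𝕜 I) (hI_ne : I ≠ ⊤) (hy : ∀ i, (y i).IsHomogeneous 1) :
    LinearIndependent 𝕜 y := by
  induction n with
  | zero => exact linearIndependent_empty_type
  | succ n ih =>
    obtain ⟨hinit, hlast⟩ := isRegSeqInDegree_succ_iff.1 hreg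
    have hyinit (i : Fin n) : (Fin.init y i).IsHomogeneous 1 := hy i.castSucc
    refine linearIndependent_finSucc'.2 ⟨ih hinit hyinit, fun hmem => hI_ne ?_⟩
    have hone : (1 : MvPolynomial σ 𝕜) ∈ I ⊔ Ideal.span (Set.range (Fin.init y)) := by
      refine hlast 1 (isHomogeneous_one _ _) ?_
      rw [mul_one]
      exact Ideal.mem_sup_right (Submodule.span_le_restrictScalars 𝕜 _ _ hmem)
    exact (Ideal.eq_top_iff_one I).2 ((hI.mem_sup_span_iff_of_isHomogeneous_zero (by simpa)
      (isHomogeneous_one _ _)).1 hone)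

lemma IsRegSeqInDegree.truncation (hreg : IsRegSeqInDegree I y m) (hI : IsHomogIdeal 𝕜 I)
    (hy : ∀ i, (y i).IsHomogeneous 1) (hm : m ≤ r) :
    IsRegSeqInDegree (idealLE 𝕜 I r) y m := by
  intro i g hg hyg
  have hyI : g ∈ I ⊔ Ideal.span (y '' {j | j < i}) :=
    hreg i g hg (sup_le_sup_right idealLE_le _ hyg)
  have hspan : IsHomogIdeal 𝕜 (Ideal.span (y '' {j | j < i})) :=
    isHomogIdeal_span (by rintro _ ⟨j, -, rfl⟩; exact ⟨1, hy j⟩)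
  obtain ⟨a, ha, b, hb, ha_hom, -, rfl⟩ := hI.exists_eq_add_of_mem_sup hspan hg hyI
  exact add_mem (Ideal.mem_sup_left (mem_idealLE_of_isHomogeneous ha_hom hm ha))
    (Ideal.mem_sup_right hb)

/- With `L = I_{≤ r}`, `(L ∩ (y)) / L(y)` vanishes in degrees at most `r + 1` because `y` is regular
in degrees at most `r`; it vanishes in higher degrees because the generators of `L` have degree at
most `r`. -/
lemma torOneVanishesInDegree_idealLE [Finite σ] (hI : IsHomogIdeal 𝕜 I) (hI_ne : I ≠ ⊤)
    (hy : ∀ i, (y i).IsHomogeneous 1) (hreg : ∀ m ≤ r, IsRegSeqInDegree I y m)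
    (hfull : ∀ m, r ≤ m → ∀ g : MvPolynomial σ 𝕜, g.IsHomogeneous m →
      g ∈ idealLE 𝕜 I r ⊔ Ideal.span (Set.range y)) (m : ℕ) :
    TorOneVanishesInDegree (idealLE 𝕜 I r) (Ideal.span (Set.range y)) m := by
  have hL : IsHomogIdeal 𝕜 (idealLE 𝕜 I r) := isHomogIdeal_idealLE hI
  have hli := (hreg 0 r.zero_le).linearIndependent hI hI_ne hy
  obtain ⟨-, k, z, hz, hreg_z, hmem⟩ := exists_regular_complement hy hli
  have hlow (j : ℕ) (hj : j ≤ r) :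
      TorOneVanishesInDegree (idealLE 𝕜 I r) (Ideal.span (Set.range y)) (j + 1) :=
    ((hreg j hj).truncation hI hy hj).torOneVanishesInDegree hL hy
  cases m with
  | zero => exact torOneVanishesInDegree_zero (by simpa using hy)
  | succ m =>
    induction m with
    | zero => exact hlow 0 r.zero_le
    | succ m ih =>
      obtain hm | hm := Nat.lt_or_ge m r
      · exact hlow (m + 1) hm
      · exact ih.succ_of_mem_mul hL (isHomogIdeal_span_range hy) hz (hreg_z _) (hfull m hm)
          fun f hf hdeg => hI.mem_idealLE_mul hmem (hm.trans m.le_succ) hdeg hf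

theorem isRegSeq_idealLE [Finite σ] (hI : IsHomogIdeal 𝕜 I) (hI_ne : I ≠ ⊤)
    (hy : ∀ i, (y i).IsHomogeneous 1) (hreg : ∀ m ≤ r, IsRegSeqInDegree I y m)
    (hfull : ∀ m, r ≤ m → ∀ g : MvPolynomial σ 𝕜, g.IsHomogeneous m →
      g ∈ idealLE 𝕜 I r ⊔ Ideal.span (Set.range y)) :
    IsRegSeq 𝕜 (idealLE 𝕜 I r) y := by
  have hL : IsHomogIdeal 𝕜 (idealLE 𝕜 I r) := isHomogIdeal_idealLE hI
  have hli := (hreg 0 r.zero_le).linearIndependent hI hI_ne hy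
  exact (hL.isRegSeq_iff hy).2 (isRegSeqInDegree_of_torOneVanishesInDegree
    (torOneVanishesInDegree_idealLE hI hI_ne hy hreg hfull) hL hy
    (exists_regular_complement hy hli).1)

end TruncationRegular

section WeakLefschetz

open MvPolynomial

variable {𝕜 : Type*} [Field 𝕜] {σ : Type*} [Finite σ] {I J : Ideal (MvPolynomial σ 𝕜)}
  {w : MvPolynomial σ 𝕜} {d m n r : ℕ}

lemma hilb_eq_zero_of_le (h : hilb 𝕜 I m = 0) (hmn : m ≤ n) : hilb 𝕜 I n = 0 := by
  have := Fintype.ofFinite σ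
  induction n, hmn using Nat.le_induction with
  | base => exact h
  | succ n _ ih =>
    rw [hilb_eq_zero_iff] at ih ⊢
    exact fun g hg => mem_of_forall_linearForm_mul_mem (P := I.restrictScalars 𝕜)
      Submodule.span_univ (fun a _ q hq => I.mul_mem_left (linearForm a) (ih q hq)) hg

lemma mulInjectiveInDegree_or_hilb_eq_zero
    (h : (∀ f ∈ quotPiece 𝕜 J m, Ideal.Quotient.mk J w * f = 0 → f = 0) ∨
      ∀ g ∈ quotPiece 𝕜 J (m + 1), ∃ f ∈ quotPiece 𝕜 J m, Ideal.Quotient.mk J w * f = g) :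
    MulInjectiveInDegree J w m ∨ hilb 𝕜 (J ⊔ Ideal.span {w}) (m + 1) = 0 := by
  refine h.imp (fun hinj g hg hwg => ?_) fun hsurj => hilb_eq_zero_iff.2 fun g hg => ?_
  · refine Ideal.Quotient.eq_zero_iff_mem.1 (hinj _ (mem_quotPiece.2 ⟨g, hg, rfl⟩) ?_)
    rwa [← map_mul, Ideal.Quotient.eq_zero_iff_mem]
  · obtain ⟨f, hf, hfg⟩ := hsurj _ (mem_quotPiece.2 ⟨g, hg, rfl⟩)
    obtain ⟨f, -, rfl⟩ := mem_quotPiece.1 hf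
    rw [← map_mul, eq_comm, Ideal.Quotient.eq] at hfg
    exact mem_sup_span_singleton_iff.2 ⟨_, hfg, f, (sub_add_cancel _ _).symm⟩

lemma IsHomogIdeal.hilb_le_of_hilb_sup_span_singleton_eq_zero (hJ : IsHomogIdeal 𝕜 J)
    (hw : w.IsHomogeneous 1) (h : hilb 𝕜 (J ⊔ Ideal.span {w}) m = 0) (hmn : m ≤ n) :
    hilb 𝕜 J n ≤ hilb 𝕜 J m := by
  induction n, hmn using Nat.le_induction with
  | base => exact le_rfl
  | succ n hn ih =>
    have hstep := hJ.hilb_sup_span_singleton_succ hw n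
    rw [hilb_eq_zero_of_le h (hn.trans n.le_succ)] at hstep
    omega

lemma IsHomogIdeal.mulInjectiveInDegree_of_hilb_le (hJ : IsHomogIdeal 𝕜 J)
    (hw : w.IsHomogeneous 1) (h : hilb 𝕜 (J ⊔ Ideal.span {w}) (m + 1) = 0) (hmn : m < n)
    (hle : hilb 𝕜 J m ≤ hilb 𝕜 J n) : MulInjectiveInDegree J w m := by
  have hstep := hJ.hilb_sup_span_singleton_succ hw m
  have hanti := hJ.hilb_le_of_hilb_sup_span_singleton_eq_zero hw h hmn
  rw [← mulKerRank_eq_zero_iff]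
  omega

lemma IsHomogIdeal.exists_mulInjectiveInDegree_of_hasWLP0 (hJ : IsHomogIdeal 𝕜 J)
    (hwlp : HasWLP0 𝕜 J) (hsymm : ∀ i ≤ d, hilb 𝕜 J i = hilb 𝕜 J (d - i)) (hr1 : 1 ≤ r)
    (hr2 : 2 * r ≤ d) (hh : hilb 𝕜 J (r - 1) = hilb 𝕜 J r) :
    ∃ w : MvPolynomial σ 𝕜, w.IsHomogeneous 1 ∧ (∀ m ≤ r, MulInjectiveInDegree J w m) ∧
      hilb 𝕜 (J ⊔ Ideal.span {w}) r = 0 := by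
  obtain ⟨w, hw : w.IsHomogeneous 1, hdeg⟩ := hwlp
  obtain ⟨s, rfl⟩ := Nat.exists_eq_add_of_le' hr1
  rw [Nat.add_sub_cancel] at hh
  refine ⟨w, hw, fun m hm => ?_, ?_⟩
  · refine (mulInjectiveInDegree_or_hilb_eq_zero (hdeg m)).elim id fun hzero => ?_
    obtain rfl | hlt := hm.eq_or_lt
    · refine hJ.mulInjectiveInDegree_of_hilb_le hw hzero (n := d - s) (by omega) ?_
      rw [← hh, hsymm s (by omega)]
    · exact hJ.mulInjectiveInDegree_of_hilb_le hw hzero (by omega) (hsymm m (by omega)).le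
  · refine (mulInjectiveInDegree_or_hilb_eq_zero (hdeg s)).elim (fun hinj => ?_) id
    have hstep := hJ.hilb_sup_span_singleton_succ hw s
    rw [mulKerRank_eq_zero_iff.2 hinj] at hstep
    omega

theorem IsHomogIdeal.exists_isRegSeq_idealLE (hI : IsHomogIdeal 𝕜 I) (hI_ne : I ≠ ⊤)
    {θ : Fin n → MvPolynomial σ 𝕜} (hθ : ∀ i, (θ i).IsHomogeneous 1) (hreg : IsRegSeq 𝕜 I θ)
    (hwlp : HasWLP0 𝕜 (I ⊔ Ideal.span (Set.range θ)))
    (hsymm : ∀ i ≤ d, hilb 𝕜 (I ⊔ Ideal.span (Set.range θ)) i =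
      hilb 𝕜 (I ⊔ Ideal.span (Set.range θ)) (d - i))
    (hr1 : 1 ≤ r) (hr2 : 2 * r ≤ d)
    (hh : hilb 𝕜 (I ⊔ Ideal.span (Set.range θ)) (r - 1) =
      hilb 𝕜 (I ⊔ Ideal.span (Set.range θ)) r) :
    ∃ y : Fin (n + 1) → MvPolynomial σ 𝕜,
      IsLsop 𝕜 (idealLE 𝕜 I r) y ∧ IsRegSeq 𝕜 (idealLE 𝕜 I r) y := by
  obtain ⟨w, hw, hinj, hzero⟩ :=
    (hI.sup_span_range hθ).exists_mulInjectiveInDegree_of_hasWLP0 hwlp hsymm hr1 hr2 hh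
  let y : Fin (n + 1) → MvPolynomial σ 𝕜 := Fin.snoc θ w
  have hy (i) : (y i).IsHomogeneous 1 := by
    refine Fin.lastCases ?_ (fun j => ?_) i
    · simpa [y] using hw
    · simpa [y] using hθ j
  have hreg_y (m : ℕ) (hm : m ≤ r) : IsRegSeqInDegree I y m := by
    rw [isRegSeqInDegree_succ_iff]
    simpa [y] using ⟨(hI.isRegSeq_iff hθ).1 hreg m, hinj m hm⟩
  have hzero_y : hilb 𝕜 (idealLE 𝕜 I r ⊔ Ideal.span (Set.range y)) r = 0 := by
    refine hilb_eq_zero_iff.2 fun g hg => ?_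
    have hmem : g ∈ I ⊔ Ideal.span (Set.range y) := by
      rw [span_range_eq_sup_last, ← sup_assoc]
      simpa [y] using hilb_eq_zero_iff.1 hzero g hg
    obtain ⟨a, ha, b, hb, ha_hom, -, rfl⟩ :=
      hI.exists_eq_add_of_mem_sup (isHomogIdeal_span_range hy) hg hmem
    exact add_mem (Ideal.mem_sup_left (mem_idealLE_of_isHomogeneous ha_hom le_rfl ha))
      (Ideal.mem_sup_right hb)
  have hfull (m : ℕ) (hm : r ≤ m) := hilb_eq_zero_of_le hzero_y hm
  exact ⟨y, ⟨hy, finiteDimensional_quotient_of_hilb_eq_zero hfull⟩,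
    isRegSeq_idealLE hI hI_ne hy hreg_y fun m hm => hilb_eq_zero_iff.1 (hfull m hm)⟩

end WeakLefschetz

section SkeletonCompletion

open MvPolynomial

variable {σ : Type*} {Δ : Set (Finset σ)} {i : ℕ}

lemma isComplex_skc : IsComplex (skc Δ i) :=
  fun _ hF _ hG _ hH => hF _ (hH.trans hG)

lemma IsComplex.subset_skc (hΔ : IsComplex Δ) : Δ ⊆ skc Δ i :=
  fun F hF G hG _ => hΔ F hF G hG

lemma IsComplex.SRideal_ne_top {𝕜 : Type*} [Field 𝕜] (hΔ : IsComplex Δ) (hempty : ∅ ∈ Δ) :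
    SRideal 𝕜 Δ ≠ ⊤ := by
  rw [Ne, Ideal.eq_top_iff_one, hΔ.mem_SRideal_iff]
  exact fun h => h 0 (by simp) (by simpa using hempty)

lemma IsComplex.SRideal_skc {𝕜 : Type*} [Field 𝕜] (hΔ : IsComplex Δ) :
    SRideal 𝕜 (skc Δ i) = idealLE 𝕜 (SRideal 𝕜 Δ) (i + 1) := by
  refine le_antisymm (Ideal.span_le.2 ?_) (Ideal.span_le.2 ?_)
  · rintro _ ⟨F, hF, rfl⟩
    obtain ⟨G, hGF, hcard, hG⟩ : ∃ G ⊆ F, #G ≤ i + 1 ∧ G ∉ Δ := by simpa [skc] using hF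
    classical
    rw [← Finset.prod_sdiff hGF]
    have hdeg : (∏ v ∈ G, X v : MvPolynomial σ 𝕜).totalDegree ≤ i + 1 :=
      (totalDegree_finsetProd _ _).trans (by simpa using hcard)
    exact Ideal.mul_mem_left _ _ (Ideal.subset_span ⟨Ideal.subset_span ⟨G, hG, rfl⟩, hdeg⟩)
  · rintro f ⟨hf, hdeg⟩
    rw [SetLike.mem_coe, isComplex_skc.mem_SRideal_iff]
    intro a ha hface
    refine hΔ.mem_SRideal_iff.1 hf a ha (hface _ subset_rfl ?_)
    calc #a.support = ∑ _v ∈ a.support, 1 := card_eq_sum_ones _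
      _ ≤ ∑ v ∈ a.support, a v :=
        Finset.sum_le_sum fun v hv => Nat.one_le_iff_ne_zero.2 (Finsupp.mem_support_iff.1 hv)
      _ ≤ f.totalDegree := le_totalDegree ha
      _ ≤ i + 1 := hdeg

end SkeletonCompletion

theorem skc_CM_of_WLP_sphere_general (𝕜 : Type*) [Field 𝕜] [Infinite 𝕜] {σ : Type*} [Finite σ]
    (Δ : Set (Finset σ)) (d r : ℕ) (hΔ : IsComplex Δ) (hempty : ∅ ∈ Δ)
    (hsymm : ∀ i ≤ d, hVec Δ d i = hVec Δ d (d - i)) (hwlp : HasWLP 𝕜 (SRideal 𝕜 Δ) d)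
    (hr1 : 1 ≤ r) (hr2 : 2 * r ≤ d) (hh : hVec Δ d (r - 1) = hVec Δ d r) :
    IsCMdim 𝕜 (SRideal 𝕜 (skc Δ (r - 1))) (d + 1) ∧
    (∀ F ∈ skc Δ (r - 1), F.card ≤ d + 1) ∧
    (∃ F ∈ skc Δ (r - 1), F.card = d + 1) := by
  obtain ⟨⟨-, hCM⟩, θ, hθ, hwlp0⟩ := hwlp
  have hcard (F) (hF : F ∈ Δ) : #F ≤ d := hΔ.card_le_of_isLsop hθ hF
  have hhilb := hΔ.hilb_sup_span_range_eq_hVec hcard hθ.1 (hCM θ hθ)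
  simp_rw [← hhilb, Nat.cast_inj] at hsymm hh
  obtain ⟨y, hy, hreg⟩ := (isHomogIdeal_SRideal Δ).exists_isRegSeq_idealLE
    (hΔ.SRideal_ne_top hempty) hθ.1 (hCM θ hθ) hwlp0 hsymm hr1 hr2 hh
  have hskc := hΔ.SRideal_skc (𝕜 := 𝕜) (i := r - 1)
  rw [Nat.sub_add_cancel hr1] at hskc
  rw [← hskc] at hy hreg
  have hempty_skc : ∅ ∈ skc Δ (r - 1) := hΔ.subset_skc hempty
  have hcard_skc (F) (hF : F ∈ skc Δ (r - 1)) : #F ≤ d + 1 :=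
    isComplex_skc.card_le_of_isLsop hy hF
  exact ⟨isComplex_skc.isCMdim_of_isRegSeq hempty_skc hy hreg, hcard_skc,
    isComplex_skc.exists_card_eq_of_isRegSeq hempty_skc hcard_skc hy.1 hreg⟩

/-- Suppose `char 𝕜 = 0` and let `Δ` be a homology
`(d-1)`-sphere over `𝕜` having the weak Lefschetz property. If
`h_{r-1}(Δ) = h_r(Δ)` for some `r ≤ d/2`, then `Δ(r-1)` is Cohen–Macaulay
over `𝕜` (its Stanley–Reisner ring is Cohen–Macaulay, of Krull dimension
`d+1`) and has dimension `d`. -/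
theorem skc_CM_of_WLP_sphere
    (𝕜 : Type*) [Field 𝕜] [CharZero 𝕜] {V : Type*} [Fintype V] [LinearOrder V]
    (Δ : Set (Finset V)) (d r : ℕ)
    (hsphere : IsHomologySphere 𝕜 Δ (d - 1))
    (hwlp : HasWLP 𝕜 (SRideal 𝕜 Δ) d)
    (hr1 : 1 ≤ r) (hr2 : 2 * r ≤ d)
    (hh : hVec Δ d (r - 1) = hVec Δ d r) :
    IsCMdim 𝕜 (SRideal 𝕜 (skc Δ (r - 1))) (d + 1) ∧
    (∀ F ∈ skc Δ (r - 1), F.card ≤ d + 1) ∧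
    (∃ F ∈ skc Δ (r - 1), F.card = d + 1) := by
  have hempty : ∅ ∈ Δ :=
    let ⟨F, hF, _⟩ := hsphere.2.2.1
    hsphere.1 F hF ∅ F.empty_subset
  have hd : d - 1 + 1 = d := by omega
  exact skc_CM_of_WLP_sphere_general 𝕜 Δ d r hsphere.1 hempty
    (fun i hi => by simpa [hd] using hsphere.hVec_symm (i := i) (by omega)) hwlp hr1 hr2 hh
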